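/- Let u^{ε,R} ∈ C^∞(Ω̄_R^ε) be the k-convex solution of the approximating problem with α ≥ α₀. Then, with a* = (C_n^k)^{−1/k} (so S_k(a*I) = 1), one has 2a*ε ≤ |Du^{ε,R}| ≤ C_ε on ∂B_ε(x₀) and ½√(λ_min(A)R) ≤ |Du^{ε,R}| ≤ C√R on ∂E_R(0), where C is a positive constant depending only on n, k, λ_max(A), λ_min(A), R₀ and α and independent of ε and R, and C_ε = C(n/k − 2)ε^{−1} if k < n/2, C_ε = Cε^{−1}|log ε|^{−1} if k = n/2, C_ε = C(2 − n/k)ε^{1−n/k} if k > n/2. -/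

import Mathlib

open scoped Classical Topology
open Real Filter MeasureTheory

noncomputable section

/-- Euclidean space ℝⁿ. -/
abbrev Euc (n : ℕ) : Type := EuclideanSpace ℝ (Fin n)

/-- The standard basis vector `e i`. -/
def ebasis (n : ℕ) (i : Fin n) : Euc n := EuclideanSpace.single i 1

/-- The Hessian matrix `D²u(x)`. -/
def hessMat (n : ℕ) (u : Euc n → ℝ) (x : Euc n) : Matrix (Fin n) (Fin n) ℝ :=
  Matrix.of fun i j => iteratedFDeriv ℝ 2 u x ![ebasis n i, ebasis n j]

/-- The Laplacian `Δu(x)` (trace of the Hessian). -/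
def lapl (n : ℕ) (u : Euc n → ℝ) (x : Euc n) : ℝ := ∑ i, hessMat n u x i i

/-- The `k`-th elementary symmetric function of the eigenvalues of an `n × n` matrix,
expressed through the coefficients of the characteristic polynomial. -/
def matSk (n k : ℕ) (M : Matrix (Fin n) (Fin n) ℝ) : ℝ :=
  (-1 : ℝ) ^ k * (Matrix.charpoly M).coeff (n - k)

/-- `S_k(D²u)(x)`. -/
def SkHess (n k : ℕ) (u : Euc n → ℝ) (x : Euc n) : ℝ := matSk n k (hessMat n u x)

/-- `u` is `k`-convex on `U`: the eigenvalues of the Hessian lie in the Gårding cone `Γ_k`. -/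
def KConvexOn (n k : ℕ) (u : Euc n → ℝ) (U : Set (Euc n)) : Prop :=
  ∀ x ∈ U, ∀ j : ℕ, 1 ≤ j → j ≤ k → 0 < matSk n j (hessMat n u x)

/-- Membership in the class `𝒜_k`: symmetric positive definite with `S_k(λ(A)) = 1`. -/
def MemA (n k : ℕ) (A : Matrix (Fin n) (Fin n) ℝ) : Prop :=
  A.IsSymm ∧ A.PosDef ∧ matSk n k A = 1

/-- The quadratic form `½ xᵀ A x`. -/
def quadA (n : ℕ) (A : Matrix (Fin n) (Fin n) ℝ) (x : Euc n) : ℝ :=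
  (1 / 2) * ∑ i, ∑ j, x i * A i j * x j

/-- The linear form `b ⋅ x`. -/
def linB (n : ℕ) (b x : Euc n) : ℝ := ∑ i, b i * x i

/-- `λ_max(A) < c`, expressed through the quadratic form (for symmetric `A`). -/
def lambdaMaxLT (n : ℕ) (A : Matrix (Fin n) (Fin n) ℝ) (c : ℝ) : Prop :=
  ∀ x : Euc n, x ≠ 0 → ∑ i, ∑ j, x i * A i j * x j < c * ‖x‖ ^ 2

/-- `u` is smooth on an open neighbourhood of the (closed) set `S`;
this is our rendering of `u ∈ C^∞(S)` for a closed set `S`. -/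
def SmoothOnNhd (n : ℕ) (u : Euc n → ℝ) (S : Set (Euc n)) : Prop :=
  ∃ U : Set (Euc n), IsOpen U ∧ S ⊆ U ∧ ContDiffOn ℝ (⊤ : ℕ∞) u U

/-- A smooth bounded strictly convex domain in ℝⁿ. -/
def SmoothStrictConvexDomain (n : ℕ) (Ω : Set (Euc n)) : Prop :=
  IsOpen Ω ∧ Bornology.IsBounded Ω ∧ Ω.Nonempty ∧ Convex ℝ Ω ∧ StrictConvex ℝ Ω ∧
    ∃ f : Euc n → ℝ, ContDiff ℝ (⊤ : ℕ∞) f ∧ Ω = {x | f x < 0} ∧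
      ∀ x ∈ frontier Ω, fderiv ℝ f x ≠ 0

/-- Extension of `u` by the constant value `v` inside `Ω`. -/
def extBy (n : ℕ) (Ω : Set (Euc n)) (v : ℝ) (u : Euc n → ℝ) : Euc n → ℝ :=
  fun x => if x ∈ Ω then v else u x

/-- `u` (vanishing on `∂Ω`) is quasiconvex: all sublevel sets of its zero-extension are convex. -/
def QuasiconvexSol (n : ℕ) (Ω : Set (Euc n)) (u : Euc n → ℝ) : Prop :=
  ∀ t : ℝ, Convex ℝ {x : Euc n | extBy n Ω 0 u x ≤ t}

/-- The `k`-th elementary symmetric polynomial of a vector `a ∈ ℝⁿ`. -/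
def esymmVec (n k : ℕ) (a : Fin n → ℝ) : ℝ :=
  ∑ s ∈ Finset.powersetCard k (Finset.univ : Finset (Fin n)), ∏ i ∈ s, a i

/-- `h_k(a) = max_i S_{k-1}(a)|_{a_i = 0} · a_i`. -/
def hkfun (n k : ℕ) (a : Fin n → ℝ) : ℝ :=
  ⨆ i : Fin n, esymmVec n (k - 1) (Function.update a i 0) * a i

/-- The exponent `-k / (2 h_k(a))`. -/
def genExp (n k : ℕ) (a : Fin n → ℝ) : ℝ := -(k : ℝ) / (2 * hkfun n k a)

/-- The integrand `(1 + α t^{-k/(2h_k(a))})^{1/k}`. -/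
def genInt (n k : ℕ) (a : Fin n → ℝ) (α t : ℝ) : ℝ :=
  (1 + α * t ^ genExp n k a) ^ ((1 : ℝ) / (k : ℝ))

/-- The generalized symmetric function `ū`. -/
def ubar (n k : ℕ) (a : Fin n → ℝ) (R₀ α : ℝ) (x : Euc n) : ℝ :=
  ∫ t in R₀..(quadA n (Matrix.diagonal a) x), genInt n k a α t

/-- `μ(α) = ∫_{R₀}^∞ ((1 + α t^{-k/(2h_k(a))})^{1/k} - 1) dt - R₀`. -/
def muA (n k : ℕ) (a : Fin n → ℝ) (R₀ α : ℝ) : ℝ :=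
  (∫ t in Set.Ioi R₀, (genInt n k a α t - 1)) - R₀

/-- The ellipsoid `E_R(xb) = {x : ½ (x - xb)ᵀ A (x - xb) < R}`. -/
def ESet (n : ℕ) (A : Matrix (Fin n) (Fin n) ℝ) (xb : Euc n) (R : ℝ) : Set (Euc n) :=
  {x : Euc n | quadA n A (x - xb) < R}

/-- The non-concentric convex ring `Ω_R^ε = E_R(0) ∖ B̄_ε(x₀)`. -/
def OmegaRe (n : ℕ) (a : Fin n → ℝ) (x₀ : Euc n) (ε R : ℝ) : Set (Euc n) :=
  ESet n (Matrix.diagonal a) 0 R \ closure (Metric.ball x₀ ε)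

/-- `u` is a `k`-convex solution of the approximating problem
`S_k(D²u) = 1` in `Ω_R^ε`, `u = 0` on `∂B_ε(x₀)`, `u = ū` on `∂E_R(0)`. -/
def ApproxSol (n k : ℕ) (a : Fin n → ℝ) (x₀ : Euc n) (ε R R₀ α : ℝ)
    (u : Euc n → ℝ) : Prop :=
  SmoothOnNhd n u (closure (OmegaRe n a x₀ ε R)) ∧
  KConvexOn n k u (OmegaRe n a x₀ ε R) ∧
  (∀ x ∈ OmegaRe n a x₀ ε R, SkHess n k u x = 1) ∧
  (∀ x ∈ Metric.sphere x₀ ε, u x = 0) ∧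
  (∀ x : Euc n, quadA n (Matrix.diagonal a) x = R → u x = ubar n k a R₀ α x)

/-- The constant `C_ε` of the boundary gradient estimate. -/
def Ceps (n k : ℕ) (C ε : ℝ) : ℝ :=
  if 2 * k < n then C * ((n : ℝ) / (k : ℝ) - 2) * ε⁻¹
  else if 2 * k = n then C * ε⁻¹ * |Real.log ε|⁻¹
  else C * (2 - (n : ℝ) / (k : ℝ)) * ε ^ (1 - (n : ℝ) / (k : ℝ))

/-- `u` is a `k`-convex solution of the exterior Dirichlet problem
`S_k(D²u) = 1` in `ℝⁿ ∖ B̄_ε(x₀)`, `u = 0` on `∂B_ε(x₀)`, with quadratic asymptotics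
`½ xᵀAx + c` at infinity (`A = diag a`). -/
def ExtBallSol (n k : ℕ) (a : Fin n → ℝ) (x₀ : Euc n) (ε c : ℝ) (u : Euc n → ℝ) : Prop :=
  SmoothOnNhd n u (Metric.ball x₀ ε)ᶜ ∧
  KConvexOn n k u (closure (Metric.ball x₀ ε))ᶜ ∧
  (∀ x ∈ (closure (Metric.ball x₀ ε))ᶜ, SkHess n k u x = 1) ∧
  (∀ x ∈ Metric.sphere x₀ ε, u x = 0) ∧
  Tendsto (fun x : Euc n => u x - (quadA n (Matrix.diagonal a) x + c))
    (cocompact (Euc n)) (𝓝 0)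

/-- `u` is a `k`-convex solution of the exterior Dirichlet problem on `ℝⁿ ∖ Ω₀` with
asymptotics `½ xᵀAx + b·x + c` at infinity. -/
def ExtDomSol (n k : ℕ) (Ω₀ : Set (Euc n)) (A : Matrix (Fin n) (Fin n) ℝ) (b : Euc n)
    (c : ℝ) (u : Euc n → ℝ) : Prop :=
  SmoothOnNhd n u Ω₀ᶜ ∧
  KConvexOn n k u (closure Ω₀)ᶜ ∧
  (∀ x ∈ (closure Ω₀)ᶜ, SkHess n k u x = 1) ∧
  (∀ x ∈ frontier Ω₀, u x = 0) ∧
  Tendsto (fun x : Euc n => u x - (quadA n A x + linB n b x + c))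
    (cocompact (Euc n)) (𝓝 0)

/-- `u` is a solution of the exterior Dirichlet problem for the Laplace equation
`Δu = 1` on `ℝⁿ ∖ Ω₀` with asymptotics `½ xᵀAx + b·x + c` at infinity. -/
def ExtDomSolLap (n : ℕ) (Ω₀ : Set (Euc n)) (A : Matrix (Fin n) (Fin n) ℝ) (b : Euc n)
    (c : ℝ) (u : Euc n → ℝ) : Prop :=
  SmoothOnNhd n u Ω₀ᶜ ∧
  (∀ x ∈ (closure Ω₀)ᶜ, lapl n u x = 1) ∧
  (∀ x ∈ frontier Ω₀, u x = 0) ∧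
  Tendsto (fun x : Euc n => u x - (quadA n A x + linB n b x + c))
    (cocompact (Euc n)) (𝓝 0)

/-- `u` solves the exterior problem `Δu = 0` in `ℝⁿ ∖ Ω̄`, `u = 1` on `∂Ω`,
`u → 0` at infinity. -/
def HarmExtSol (n : ℕ) (Ω : Set (Euc n)) (u : Euc n → ℝ) : Prop :=
  SmoothOnNhd n u Ωᶜ ∧
  (∀ x ∈ (closure Ω)ᶜ, lapl n u x = 0) ∧
  (∀ x ∈ frontier Ω, u x = 1) ∧
  Tendsto u (cocompact (Euc n)) (𝓝 0)

end

/-! Newton's inequalities make `S_k` increase along positive semidefinite rank-one perturbations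
inside `Γ_k`, so a `k`-convex `u` with `S_k(D²u) = 1` obeys the comparison principle. On the outer
ellipsoid the functions `s + c - R` and `2M s + c - 2MR` of `s(x) = ½ xᵀAx` touch `u` from above
and from below. On the inner sphere `a*(|x - x₀|² - ε²)` touches `u` from below, `ū` ensuring that
it stays below `u` on `∂E_{2R₀}(0)`, and the radial function with derivative `m (2s)^(-n/2k)` in
`s = ½|x - x₀|²`, for which `S_k = 0`, touches `u` from above. Where two functions touch on a
boundary level set their gradients are parallel to the conormal and ordered, so the gradient of `u`
there lies between those of its barriers. -/

section RealRootedPolynomials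

open Polynomial

theorem splits_derivative {p : ℝ[X]} (hp : p.Splits) : (derivative p).Splits := by
  by_cases hdeg : p.natDegree = 0
  · rw [eq_C_of_natDegree_eq_zero hdeg]
    simp
  · rw [splits_iff_card_roots] at hp ⊢
    have hrolle := card_roots_le_derivative p
    have hderiv : (derivative p).natDegree = p.natDegree - 1 := natDegree_derivative p
    have hle := card_roots' (derivative p)
    omega

theorem splits_iterate_derivative {p : ℝ[X]} (hp : p.Splits) (j : ℕ) :
    (derivative^[j] p).Splits := by
  induction j with
  | zero => exact hp
  | succ j ih =>
    rw [Function.iterate_succ_apply']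
    exact splits_derivative ih

theorem two_mul_coeff_zero_mul_coeff_two_le_sq_of_prod (s : Multiset ℝ) :
    2 * ((s.map fun t => X - C t).prod.coeff 0 * (s.map fun t => X - C t).prod.coeff 2) ≤
      (s.map fun t => X - C t).prod.coeff 1 ^ 2 := by
  induction s using Multiset.induction_on with
  | empty => simp [coeff_one]
  | cons r s ih =>
    rw [Multiset.map_cons, Multiset.prod_cons]
    set q := (s.map fun t => X - C t).prod
    have h0 : ((X - C r) * q).coeff 0 = -r * q.coeff 0 := by simp [sub_mul]
    have h1 : ((X - C r) * q).coeff 1 = q.coeff 0 - r * q.coeff 1 := by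
      simp [sub_mul, coeff_X_mul q 0]
    have h2 : ((X - C r) * q).coeff 2 = q.coeff 1 - r * q.coeff 2 := by
      simp [sub_mul, coeff_X_mul q 1]
    rw [h0, h1, h2]
    nlinarith [mul_le_mul_of_nonneg_left ih (sq_nonneg r), sq_nonneg (q.coeff 0)]

theorem two_mul_coeff_zero_mul_coeff_two_le_sq {p : ℝ[X]} (hp : p.Splits) :
    2 * (p.coeff 0 * p.coeff 2) ≤ p.coeff 1 ^ 2 := by
  rw [hp.eq_prod_roots]
  simp only [coeff_C_mul]
  nlinarith [mul_le_mul_of_nonneg_left (two_mul_coeff_zero_mul_coeff_two_le_sq_of_prod p.roots)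
    (sq_nonneg p.leadingCoeff)]

/- Rolle reduces to `j = 0`: the `j`-th Hasse derivative of `p` is again real-rooted, and its
first three coefficients are multiples of `p.coeff j`, `p.coeff (j + 1)`, `p.coeff (j + 2)`. -/
theorem newton_coeff_inequality {p : ℝ[X]} (hp : p.Splits) (j : ℕ) :
    (j + 2) * (p.coeff j * p.coeff (j + 2)) ≤ (j + 1) * p.coeff (j + 1) ^ 2 := by
  have hsplits : (hasseDeriv j p).Splits := by
    have hj : (j.factorial : ℝ) ≠ 0 := by positivity
    have h := (splits_iterate_derivative hp j).C_mul (j.factorial : ℝ)⁻¹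
    rwa [← factorial_smul_hasseDeriv, ← smul_eq_C_mul, LinearMap.smul_apply,
      ← Nat.cast_smul_eq_nsmul ℝ, smul_smul, inv_mul_cancel₀ hj, one_smul] at h
  have hbase := two_mul_coeff_zero_mul_coeff_two_le_sq hsplits
  have hchoose : ((j + 2).choose j : ℝ) = (j + 2) * (j + 1) / 2 := by
    rw [Nat.choose_symm_add, Nat.cast_choose_two]
    push_cast
    ring
  simp only [hasseDeriv_coeff, zero_add, Nat.choose_self, Nat.choose_succ_self_right, hchoose,
    add_comm 2 j, add_comm 1 j] at hbase
  push_cast at hbase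
  refine le_of_mul_le_mul_left ?_ (by positivity : (0 : ℝ) < j + 1)
  linarith

theorem coeff_mul_coeff_add_two_le_sq {p : ℝ[X]} (hp : p.Splits) (j : ℕ) :
    p.coeff j * p.coeff (j + 2) ≤ p.coeff (j + 1) ^ 2 := by
  nlinarith [newton_coeff_inequality hp j, sq_nonneg (p.coeff (j + 1)),
    (Nat.cast_nonneg j : (0 : ℝ) ≤ j)]

end RealRootedPolynomials

section ElementarySymmetric

open Polynomial

variable {n : ℕ}

theorem coeff_prod_X_sub_C {ι : Type*} (s : Finset ι) (b : ι → ℝ) {j : ℕ} (hj : j ≤ s.card) :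
    (∏ i ∈ s, (X - C (b i))).coeff (s.card - j) =
      (-1) ^ j * ∑ t ∈ s.powersetCard j, ∏ i ∈ t, b i := by
  have hneg : ∏ i ∈ s, (X - C (b i)) = ∏ i ∈ s, (X + C (-b i)) :=
    Finset.prod_congr rfl fun i _ => by rw [map_neg, sub_eq_add_neg]
  rw [hneg, Finset.prod_X_add_C_coeff s _ (Nat.sub_le _ _), Nat.sub_sub_self hj, Finset.mul_sum]
  refine Finset.sum_congr rfl fun t ht => ?_
  rw [Finset.prod_neg, (Finset.mem_powersetCard.1 ht).2]

theorem coeff_prod_univ_X_sub_C (b : Fin n → ℝ) {j : ℕ} (hj : j ≤ n) :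
    (∏ i, (X - C (b i))).coeff (n - j) = (-1) ^ j * esymmVec n j b := by
  simpa [esymmVec] using coeff_prod_X_sub_C Finset.univ b (by simpa using hj)

theorem esymmVec_zero (b : Fin n → ℝ) : esymmVec n 0 b = 1 := by
  simp [esymmVec]

theorem esymmVec_eq_zero_of_lt {j : ℕ} (hj : n < j) (b : Fin n → ℝ) : esymmVec n j b = 0 := by
  rw [esymmVec, Finset.powersetCard_eq_empty.2 (by simpa using hj), Finset.sum_empty]

theorem esymmVec_mul_esymmVec_add_two_le_sq (j : ℕ) (b : Fin n → ℝ) :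
    esymmVec n j b * esymmVec n (j + 2) b ≤ esymmVec n (j + 1) b ^ 2 := by
  obtain hj | hj := le_or_gt (j + 2) n
  · have h := coeff_mul_coeff_add_two_le_sq (p := ∏ i, (X - C (b i)))
      (Splits.prod fun i _ => Splits.X_sub_C _) (n - (j + 2))
    rw [show n - (j + 2) + 2 = n - j by lia, show n - (j + 2) + 1 = n - (j + 1) by lia,
      coeff_prod_univ_X_sub_C b hj, coeff_prod_univ_X_sub_C b (by lia),
      coeff_prod_univ_X_sub_C b (by lia)] at h
    have hsign : ((-1 : ℝ) ^ j) ^ 2 = 1 := by rw [pow_right_comm, neg_one_sq, one_pow]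
    linear_combination h + (esymmVec n (j + 1) b ^ 2 - esymmVec n j b * esymmVec n (j + 2) b) *
      hsign
  · rw [esymmVec_eq_zero_of_lt hj, mul_zero]
    positivity

theorem esymmVec_update_zero (j : ℕ) (b : Fin n → ℝ) (i : Fin n) :
    esymmVec n j (Function.update b i 0) =
      ∑ s ∈ (Finset.univ.erase i).powersetCard j, ∏ l ∈ s, b l := by
  rw [esymmVec, ← Finset.sum_subset (Finset.powersetCard_mono (Finset.erase_subset i _))]
  · refine Finset.sum_congr rfl fun s hs => Finset.prod_congr rfl fun l hl => ?_
    exact Function.update_of_ne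
      (Finset.ne_of_mem_erase ((Finset.mem_powersetCard.1 hs).1 hl)) _ _
  · intro s hs hs'
    refine Finset.prod_eq_zero (i := i) ?_ (Function.update_self ..)
    by_contra hi
    refine hs' (Finset.mem_powersetCard.2 ⟨fun l hl => ?_, (Finset.mem_powersetCard.1 hs).2⟩)
    exact Finset.mem_erase.2 ⟨fun h => hi (h ▸ hl), Finset.mem_univ l⟩

theorem esymmVec_succ_eq_update (j : ℕ) (b : Fin n → ℝ) (i : Fin n) :
    esymmVec n (j + 1) b = esymmVec n (j + 1) (Function.update b i 0) +
      b i * esymmVec n j (Function.update b i 0) := by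
  have hi : i ∉ Finset.univ.erase i := Finset.notMem_erase i _
  have hnotMem : ∀ s ∈ (Finset.univ.erase i).powersetCard j, i ∉ s := fun s hs his =>
    hi ((Finset.mem_powersetCard.1 hs).1 his)
  rw [esymmVec_update_zero, esymmVec_update_zero, esymmVec,
    ← Finset.insert_erase (Finset.mem_univ i), Finset.powersetCard_succ_insert hi,
    Finset.sum_union, Finset.sum_image, Finset.insert_erase (Finset.mem_univ i), Finset.mul_sum]
  · congr 1
    exact Finset.sum_congr rfl fun s hs => Finset.prod_insert (hnotMem s hs)
  · intro s hs t ht hst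
    rw [← Finset.erase_insert (hnotMem s hs), hst, Finset.erase_insert (hnotMem t ht)]
  · refine Finset.disjoint_left.2 fun s hs hs' => ?_
    obtain ⟨t, -, rfl⟩ := Finset.mem_image.1 hs'
    exact hi ((Finset.mem_powersetCard.1 hs).1 (Finset.mem_insert_self i t))

theorem coeff_prod_erase_X_sub_C (b : Fin n → ℝ) (i : Fin n) {j : ℕ} (hj : j + 1 ≤ n) :
    (∏ l ∈ Finset.univ.erase i, (X - C (b l))).coeff (n - (j + 1)) =
      (-1) ^ j * esymmVec n j (Function.update b i 0) := by
  have hcard : (Finset.univ.erase i).card = n - 1 := by simp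
  rw [esymmVec_update_zero, ← coeff_prod_X_sub_C _ b (by lia), hcard]
  congr 1
  lia

theorem esymmVec_smul (j : ℕ) (c : ℝ) (b : Fin n → ℝ) :
    esymmVec n j (c • b) = c ^ j * esymmVec n j b := by
  rw [esymmVec, esymmVec, Finset.mul_sum]
  refine Finset.sum_congr rfl fun s hs => ?_
  simp only [Pi.smul_apply, smul_eq_mul, Finset.prod_mul_distrib, Finset.prod_const,
    (Finset.mem_powersetCard.1 hs).2]

theorem esymmVec_smul_update (j : ℕ) (c : ℝ) (b : Fin n → ℝ) (i : Fin n) :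
    esymmVec n j (Function.update (c • b) i 0) = c ^ j * esymmVec n j (Function.update b i 0) := by
  rw [← esymmVec_smul, ← Function.update_smul, smul_zero]

theorem esymmVec_pos {j : ℕ} (hj : j ≤ n) {b : Fin n → ℝ} (hb : ∀ i, 0 < b i) :
    0 < esymmVec n j b :=
  Finset.sum_pos (fun _ _ => Finset.prod_pos fun i _ => hb i)
    (Finset.powersetCard_nonempty.2 (by simpa using hj))

theorem esymmVec_update_pos {j : ℕ} (hj : j + 1 ≤ n) {b : Fin n → ℝ} (hb : ∀ i, 0 < b i)
    (i : Fin n) : 0 < esymmVec n j (Function.update b i 0) := by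
  rw [esymmVec_update_zero]
  refine Finset.sum_pos (fun _ _ => Finset.prod_pos fun l _ => hb l)
    (Finset.powersetCard_nonempty.2 ?_)
  simp only [Finset.card_erase_of_mem (Finset.mem_univ i), Finset.card_univ, Fintype.card_fin]
  lia

theorem esymmVec_update_nonneg (j : ℕ) {b : Fin n → ℝ} (hb : ∀ i, 0 ≤ b i) (i : Fin n) :
    0 ≤ esymmVec n j (Function.update b i 0) := by
  rw [esymmVec_update_zero]
  exact Finset.sum_nonneg fun _ _ => Finset.prod_nonneg fun l _ => hb l

theorem esymmVec_one (j : ℕ) : esymmVec n j 1 = n.choose j := by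
  simp [esymmVec]

theorem esymmVec_one_update (j : ℕ) (i : Fin n) :
    esymmVec n j (Function.update 1 i 0) = (n - 1).choose j := by
  simp [esymmVec_update_zero]

/- By induction on `k`: if the restricted `S_{k+1}` were nonpositive, the recurrence
for `S_{k+1}` and `S_{k+2}` would contradict Newton's inequality for the restricted vector. -/
theorem esymmVec_update_pos_of_forall_pos (k : ℕ) {b : Fin n → ℝ} (i : Fin n)
    (hb : ∀ j, 1 ≤ j → j ≤ k + 1 → 0 < esymmVec n j b) :
    0 < esymmVec n k (Function.update b i 0) := by
  induction k with
  | zero => simp [esymmVec_zero]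
  | succ k ih =>
    have hprev := ih fun j h1 h2 => hb j h1 (by lia)
    have hsucc := hb (k + 1) (by lia) (by lia)
    have hsucc2 := hb (k + 2) (by lia) (by lia)
    rw [esymmVec_succ_eq_update _ b i] at hsucc hsucc2
    have hnewton := esymmVec_mul_esymmVec_add_two_le_sq k (Function.update b i 0)
    by_contra! hneg
    nlinarith [mul_pos hprev hsucc2, mul_nonneg (neg_nonneg.2 hneg) hsucc.le]

end ElementarySymmetric

section CharpolyCoefficients

open Polynomial

variable {n k : ℕ}

theorem inv_diagonal_of_ne_zero {d : Fin n → ℝ} (hd : ∀ i, d i ≠ 0) :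
    (Matrix.diagonal d)⁻¹ = Matrix.diagonal fun i => (d i)⁻¹ := by
  refine Matrix.inv_eq_right_inv ?_
  rw [Matrix.diagonal_mul_diagonal, ← Matrix.diagonal_one]
  congr 1
  ext i
  exact mul_inv_cancel₀ (hd i)

theorem det_diagonal_sub_smul_vecMulVec {d : Fin n → ℝ} (hd : ∀ i, d i ≠ 0) (c : ℝ)
    (y : Fin n → ℝ) :
    (Matrix.diagonal d - c • Matrix.vecMulVec y y).det =
      ∏ i, d i - ∑ i, c * y i ^ 2 * ∏ l ∈ Finset.univ.erase i, d l := by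
  have hrank : Matrix.diagonal d - c • Matrix.vecMulVec y y = Matrix.diagonal d +
      Matrix.replicateCol Unit (fun i => -c * y i) * Matrix.replicateRow Unit y := by
    ext i j
    simp only [Matrix.sub_apply, Matrix.smul_apply, Matrix.vecMulVec_apply, smul_eq_mul,
      Matrix.add_apply, Matrix.mul_apply, Finset.univ_unique, Finset.sum_singleton,
      Matrix.replicateCol_apply, Matrix.replicateRow_apply]
    ring
  have hunit : IsUnit (Matrix.diagonal d).det := by
    rw [Matrix.det_diagonal, isUnit_iff_ne_zero]
    exact Finset.prod_ne_zero_iff.2 fun i _ => hd i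
  rw [hrank, Matrix.det_add_replicateCol_mul_replicateRow hunit, Matrix.det_diagonal,
    inv_diagonal_of_ne_zero hd, Matrix.det_unique]
  simp only [Matrix.add_apply, Matrix.one_apply_eq, Matrix.mul_apply, Matrix.diagonal_apply,
    mul_ite, mul_zero, Finset.sum_ite_eq', Finset.mem_univ, if_true,
    Matrix.replicateRow_apply, Matrix.replicateCol_apply]
  rw [mul_add, mul_one, sub_eq_add_neg, Finset.mul_sum, ← Finset.sum_neg_distrib]
  congr 1
  refine Finset.sum_congr rfl fun i _ => ?_
  rw [← Finset.mul_prod_erase Finset.univ _ (Finset.mem_univ i)]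
  have := hd i
  field_simp

theorem charpoly_diagonal_add_smul_vecMulVec (b y : Fin n → ℝ) (c : ℝ) :
    (Matrix.diagonal b + c • Matrix.vecMulVec y y).charpoly =
      ∏ i, (X - C (b i)) - ∑ i, C (c * y i ^ 2) * ∏ l ∈ Finset.univ.erase i, (X - C (b l)) := by
  refine eq_of_infinite_eval_eq _ _ ((Set.finite_range b).infinite_compl.mono fun t ht => ?_)
  have hne : ∀ i, t - b i ≠ 0 := fun i hi => ht ⟨i, (sub_eq_zero.1 hi).symm⟩
  have hscalar : Matrix.scalar (Fin n) t - (Matrix.diagonal b + c • Matrix.vecMulVec y y) =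
      Matrix.diagonal (fun i => t - b i) - c • Matrix.vecMulVec y y := by
    rw [← sub_sub, Matrix.scalar_apply, Matrix.diagonal_sub]
  rw [Set.mem_ofPred_eq, Matrix.eval_charpoly, hscalar, det_diagonal_sub_smul_vecMulVec hne]
  simp only [eval_sub, eval_prod, eval_X, eval_C, eval_finsetSum, eval_mul]

theorem matSk_diagonal_add_smul_vecMulVec (hk : k + 1 ≤ n) (b y : Fin n → ℝ) (c : ℝ) :
    matSk n (k + 1) (Matrix.diagonal b + c • Matrix.vecMulVec y y) =
      esymmVec n (k + 1) b + c * ∑ i, y i ^ 2 * esymmVec n k (Function.update b i 0) := by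
  have hsum : ∑ i, c * y i ^ 2 * ((-1) ^ k * esymmVec n k (Function.update b i 0)) =
      (-1) ^ k * (c * ∑ i, y i ^ 2 * esymmVec n k (Function.update b i 0)) := by
    rw [Finset.mul_sum, Finset.mul_sum]
    exact Finset.sum_congr rfl fun i _ => by ring
  have hsign : ((-1 : ℝ) ^ k) ^ 2 = 1 := by rw [pow_right_comm, neg_one_sq, one_pow]
  rw [matSk, charpoly_diagonal_add_smul_vecMulVec, coeff_sub, coeff_prod_univ_X_sub_C b hk,
    finsetSum_coeff]
  simp only [coeff_C_mul, coeff_prod_erase_X_sub_C b _ hk]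
  rw [hsum]
  linear_combination (esymmVec n (k + 1) b +
    c * ∑ i, y i ^ 2 * esymmVec n k (Function.update b i 0)) * hsign

theorem matSk_diagonal (hk : k ≤ n) (b : Fin n → ℝ) :
    matSk n k (Matrix.diagonal b) = esymmVec n k b := by
  have hsign : ((-1 : ℝ) ^ k) ^ 2 = 1 := by rw [pow_right_comm, neg_one_sq, one_pow]
  rw [matSk, Matrix.charpoly_diagonal, coeff_prod_univ_X_sub_C b hk]
  linear_combination (esymmVec n k b) * hsign

end CharpolyCoefficients

section GardingCone

open scoped Matrix

variable {n k : ℕ}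

theorem matSk_eq_sum_minors (hk : k ≤ n) (M : Matrix (Fin n) (Fin n) ℝ) :
    matSk n k M = ∑ s ∈ Finset.univ.powersetCard k,
      (M.submatrix (Subtype.val : s → Fin n) (Subtype.val : s → Fin n)).det := by
  have h := Matrix.charpoly_coeff_eq_sum_minors M k (by simpa using hk)
  rw [Fintype.card_fin] at h
  rw [matSk, h, ← mul_assoc, ← mul_pow, neg_one_mul, neg_neg, one_pow, one_mul]

theorem matSk_smul (hk : k ≤ n) (c : ℝ) (M : Matrix (Fin n) (Fin n) ℝ) :
    matSk n k (c • M) = c ^ k * matSk n k M := by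
  rw [matSk_eq_sum_minors hk, matSk_eq_sum_minors hk, Finset.mul_sum]
  refine Finset.sum_congr rfl fun s hs => ?_
  rw [Matrix.submatrix_smul, Pi.smul_apply, Pi.smul_apply, Matrix.det_smul, Fintype.card_coe,
    (Finset.mem_powersetCard.1 hs).2]

/-- The matrices whose eigenvalue vector lies in the open Gårding cone `Γ_k`, that is, with
`S_1, …, S_k` all positive. -/
def gardingCone (n k : ℕ) : Set (Matrix (Fin n) (Fin n) ℝ) :=
  {M | ∀ j, 1 ≤ j → j ≤ k → 0 < matSk n j M}

theorem exists_charpoly_eq_diagonal_add_vecMulVec {M : Matrix (Fin n) (Fin n) ℝ}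
    (hM : M.IsSymm) (y : Fin n → ℝ) :
    ∃ d z : Fin n → ℝ, M.charpoly = (Matrix.diagonal d).charpoly ∧
      (M + Matrix.vecMulVec y y).charpoly =
        (Matrix.diagonal d + (1 : ℝ) • Matrix.vecMulVec z z).charpoly := by
  have hHerm : M.IsHermitian := by
    rwa [Matrix.IsHermitian, Matrix.conjTranspose_eq_transpose_of_trivial]
  set U : Matrix (Fin n) (Fin n) ℝ := hHerm.eigenvectorUnitary.1
  have hUU : star U * U = 1 := Unitary.coe_star_mul_self _
  have hUU' : U * star U = 1 := Unitary.coe_mul_star_self _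
  have hspec : M = U * Matrix.diagonal hHerm.eigenvalues * star U := by
    have h := hHerm.spectral_theorem
    rwa [Unitary.conjStarAlgAut_apply] at h
  have hstar : star U = U.transpose := by
    rw [Matrix.star_eq_conjTranspose, Matrix.conjTranspose_eq_transpose_of_trivial]
  have hconj : ∀ N, (U * N * star U).charpoly = N.charpoly := fun N => by
    rw [Matrix.charpoly_mul_comm, ← mul_assoc, hUU, one_mul]
  have hvec : U * Matrix.vecMulVec (star U *ᵥ y) (star U *ᵥ y) * star U =
      Matrix.vecMulVec y y := by
    rw [Matrix.mul_vecMulVec, Matrix.vecMulVec_mul, Matrix.mulVec_mulVec, hUU',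
      Matrix.one_mulVec, hstar, Matrix.mulVec_transpose, Matrix.vecMul_vecMul, ← hstar, hUU',
      Matrix.vecMul_one]
  refine ⟨hHerm.eigenvalues, star U *ᵥ y, ?_, ?_⟩
  · rw [← hconj (Matrix.diagonal _), ← hspec]
  · rw [← hconj (Matrix.diagonal _ + _), one_smul, mul_add, add_mul, ← hspec, hvec]

theorem matSk_le_matSk_add_vecMulVec (hk : k ≤ n) {M : Matrix (Fin n) (Fin n) ℝ}
    (hM : M.IsSymm) (hcone : M ∈ gardingCone n k) (y : Fin n → ℝ) {j : ℕ} (hj : 1 ≤ j)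
    (hjk : j ≤ k) : matSk n j M ≤ matSk n j (M + Matrix.vecMulVec y y) := by
  obtain ⟨d, z, hd, hz⟩ := exists_charpoly_eq_diagonal_add_vecMulVec hM y
  have hMd : ∀ l, matSk n l M = matSk n l (Matrix.diagonal d) := fun l => by
    rw [matSk, hd, matSk]
  have hMz : matSk n j (M + Matrix.vecMulVec y y) =
      matSk n j (Matrix.diagonal d + (1 : ℝ) • Matrix.vecMulVec z z) := by
    rw [matSk, hz, matSk]
  obtain ⟨m, rfl⟩ : ∃ m, j = m + 1 := ⟨j - 1, by lia⟩
  rw [hMd, hMz, matSk_diagonal_add_smul_vecMulVec (by lia), matSk_diagonal (by lia), one_mul,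
    le_add_iff_nonneg_right]
  refine Finset.sum_nonneg fun i _ => mul_nonneg (sq_nonneg _) (le_of_lt ?_)
  refine esymmVec_update_pos_of_forall_pos m i fun l hl hlm => ?_
  rw [← matSk_diagonal (by lia), ← hMd]
  exact hcone l hl (by lia)

theorem add_sum_vecMulVec_mem_gardingCone (hk1 : 1 ≤ k) (hk : k ≤ n)
    {M : Matrix (Fin n) (Fin n) ℝ} (hM : M.IsSymm) (hcone : M ∈ gardingCone n k)
    {ι : Type*} (v : ι → Fin n → ℝ) (s : Finset ι) :
    (M + ∑ i ∈ s, Matrix.vecMulVec (v i) (v i)).IsSymm ∧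
      M + ∑ i ∈ s, Matrix.vecMulVec (v i) (v i) ∈ gardingCone n k ∧
      matSk n k M ≤ matSk n k (M + ∑ i ∈ s, Matrix.vecMulVec (v i) (v i)) := by
  induction s using Finset.induction_on with
  | empty => simpa using ⟨hM, hcone⟩
  | insert i s hi ih =>
    obtain ⟨hsymm, hmem, hle⟩ := ih
    rw [Finset.sum_insert hi, add_comm (Matrix.vecMulVec _ _), ← add_assoc]
    have hstep := fun j => matSk_le_matSk_add_vecMulVec hk hsymm hmem (v i) (j := j)
    exact ⟨hsymm.add (Matrix.transpose_vecMulVec _ _),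
      fun j hj hjk => (hmem j hj hjk).trans_le (hstep j hj hjk), hle.trans (hstep k hk1 le_rfl)⟩

theorem matSk_le_matSk_add_of_posSemidef (hk1 : 1 ≤ k) (hk : k ≤ n)
    {M P : Matrix (Fin n) (Fin n) ℝ} (hM : M.IsSymm) (hcone : M ∈ gardingCone n k)
    (hP : P.PosSemidef) : matSk n k M ≤ matSk n k (M + P) := by
  obtain ⟨m, v, rfl⟩ := Matrix.posSemidef_iff_eq_sum_vecMulVec.1 hP
  simpa only [star_trivial] using
    (add_sum_vecMulVec_mem_gardingCone hk1 hk hM hcone v Finset.univ).2.2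

/- Newton's inequality for the vectors with one entry removed makes the ratio of
`∑ y i ^ 2 * S_j(b|i)` to `S_{j+1}(b)` nonincreasing in `j`. -/
theorem matSk_pos_of_matSk_succ_pos {j : ℕ} (hj : j + 2 ≤ n) {b : Fin n → ℝ}
    (hb : ∀ i, 0 < b i) (y : Fin n → ℝ) {c : ℝ} (hc : c ≤ 0)
    (hpos : 0 < matSk n (j + 2) (Matrix.diagonal b + c • Matrix.vecMulVec y y)) :
    0 < matSk n (j + 1) (Matrix.diagonal b + c • Matrix.vecMulVec y y) := by
  rw [matSk_diagonal_add_smul_vecMulVec hj] at hpos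
  rw [matSk_diagonal_add_smul_vecMulVec (by lia)]
  have hterm : ∀ i, esymmVec n j (Function.update b i 0) * esymmVec n (j + 2) b ≤
      esymmVec n (j + 1) (Function.update b i 0) * esymmVec n (j + 1) b := fun i => by
    rw [esymmVec_succ_eq_update (j + 1) b i, esymmVec_succ_eq_update j b i]
    nlinarith [esymmVec_mul_esymmVec_add_two_le_sq j (Function.update b i 0)]
  have hsum : (∑ i, y i ^ 2 * esymmVec n j (Function.update b i 0)) * esymmVec n (j + 2) b ≤
      (∑ i, y i ^ 2 * esymmVec n (j + 1) (Function.update b i 0)) * esymmVec n (j + 1) b := by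
    rw [Finset.sum_mul, Finset.sum_mul]
    refine Finset.sum_le_sum fun i _ => ?_
    rw [mul_assoc, mul_assoc]
    exact mul_le_mul_of_nonneg_left (hterm i) (sq_nonneg _)
  have h1 := esymmVec_pos (show j + 1 ≤ n by lia) hb
  have h2 := esymmVec_pos hj hb
  refine pos_of_mul_pos_left ?_ h2.le
  nlinarith [mul_pos h1 hpos, mul_le_mul_of_nonneg_left hsum (neg_nonneg.2 hc)]

theorem diagonal_add_smul_vecMulVec_mem_gardingCone (hk : k ≤ n) {b : Fin n → ℝ}
    (hb : ∀ i, 0 < b i) (y : Fin n → ℝ) {c : ℝ} (hc : c ≤ 0)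
    (hpos : 0 < matSk n k (Matrix.diagonal b + c • Matrix.vecMulVec y y)) :
    Matrix.diagonal b + c • Matrix.vecMulVec y y ∈ gardingCone n k := by
  intro j hj hjk
  induction hjk using Nat.decreasingInduction with
  | self => exact hpos
  | of_succ m hmk ih =>
    obtain ⟨i, rfl⟩ : ∃ i, m = i + 1 := ⟨m - 1, by lia⟩
    exact matSk_pos_of_matSk_succ_pos (by lia) hb y hc (ih (by lia))

end GardingCone

section SecondOrderCondition

theorem deriv_deriv_nonneg_of_isLocalMin {g : ℝ → ℝ} {t : ℝ} (hmin : IsLocalMin g t)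
    (hg : ContinuousAt g t) : 0 ≤ deriv (deriv g) t := by
  by_contra! hneg
  have hmax := isLocalMax_of_deriv_deriv_neg hneg hmin.deriv_eq_zero hg
  have hconst : g =ᶠ[𝓝 t] fun _ => g t := by
    filter_upwards [hmin, hmax] with s hge hle using le_antisymm hle hge
  have hderiv : deriv g =ᶠ[𝓝 t] fun _ => 0 := by
    filter_upwards [hconst.eventuallyEq_nhds] with s hs
    rw [hs.deriv_eq, deriv_const]
  rw [hderiv.deriv_eq, deriv_const] at hneg
  exact lt_irrefl 0 hneg

theorem hasDerivAt_add_smul {E : Type*} [NormedAddCommGroup E] [NormedSpace ℝ E] (x v : E)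
    (t : ℝ) : HasDerivAt (fun s : ℝ => x + s • v) v t := by
  simpa using ((hasDerivAt_id t).smul_const v).const_add x

theorem fderiv_fderiv_nonneg_of_isLocalMin {E : Type*} [NormedAddCommGroup E] [NormedSpace ℝ E]
    {f : E → ℝ} {x : E} (hf : ContDiffAt ℝ 2 f x) (hmin : IsLocalMin f x) (v : E) :
    0 ≤ fderiv ℝ (fderiv ℝ f) x v v := by
  have hx : x + (0 : ℝ) • v = x := by rw [zero_smul, add_zero]
  have hline : Tendsto (fun t : ℝ => x + t • v) (𝓝 0) (𝓝 x) := by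
    simpa using (hasDerivAt_add_smul x v 0).continuousAt.tendsto
  have hderiv : deriv (fun t : ℝ => f (x + t • v)) =ᶠ[𝓝 0]
      fun t => fderiv ℝ f (x + t • v) v := by
    filter_upwards [hline.eventually (hf.eventually (by simp))] with t ht
    have hdiff : DifferentiableAt ℝ f (x + t • v) := ht.differentiableAt (by simp)
    exact (hdiff.hasFDerivAt.comp_hasDerivAt t (hasDerivAt_add_smul x v t)).deriv
  have hdiff : DifferentiableAt ℝ (fderiv ℝ f) x :=
    (hf.fderiv_right (m := 1) (by norm_num)).differentiableAt (by simp)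
  have hfderiv : HasFDerivAt (fderiv ℝ f) (fderiv ℝ (fderiv ℝ f) x) (x + (0 : ℝ) • v) := by
    rw [hx]
    exact hdiff.hasFDerivAt
  have hsecond : deriv (deriv fun t : ℝ => f (x + t • v)) 0 = fderiv ℝ (fderiv ℝ f) x v v := by
    have hcomp := hfderiv.comp_hasDerivAt (0 : ℝ) (hasDerivAt_add_smul x v 0)
    rw [hderiv.deriv_eq]
    exact (hcomp.clm_apply (hasDerivAt_const (0 : ℝ) v)).deriv.trans (by simp)
  rw [← hsecond]
  refine deriv_deriv_nonneg_of_isLocalMin ?_ ?_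
  · filter_upwards [hline.eventually hmin] with t ht
    rwa [hx]
  · exact ContinuousAt.comp (f := fun t : ℝ => x + t • v) (g := f) (hx.symm ▸ hf.continuousAt)
      (hasDerivAt_add_smul x v 0).continuousAt

end SecondOrderCondition

section Hessian

variable {n : ℕ} {f g : Euc n → ℝ} {x : Euc n}

theorem hessMat_apply (f : Euc n → ℝ) (x : Euc n) (i j : Fin n) :
    hessMat n f x i j = fderiv ℝ (fderiv ℝ f) x (ebasis n i) (ebasis n j) := by
  simp [hessMat, iteratedFDeriv_two_apply]

theorem hessMat_isSymm (hf : ContDiffAt ℝ 2 f x) : (hessMat n f x).IsSymm := by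
  ext i j
  rw [Matrix.transpose_apply, hessMat_apply, hessMat_apply]
  exact hf.isSymmSndFDerivAt (by simp) _ _

theorem hessMat_sub (hf : ContDiffAt ℝ 2 f x) (hg : ContDiffAt ℝ 2 g x) :
    hessMat n (f - g) x = hessMat n f x - hessMat n g x := by
  ext i j
  simp only [hessMat, Matrix.of_apply, Matrix.sub_apply]
  rw [iteratedFDeriv_sub_apply (by exact_mod_cast hf) (by exact_mod_cast hg)]
  rfl

theorem hessMat_const_mul_add_const (hf : ContDiffAt ℝ 2 f x) (c d : ℝ) :
    hessMat n (fun y => c * f y + d) x = c • hessMat n f x := by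
  have hfirst : fderiv ℝ (fun y => c * f y + d) =ᶠ[𝓝 x] c • fderiv ℝ f := by
    filter_upwards [hf.eventually (by simp)] with y hy
    exact (((hy.differentiableAt (by simp)).hasFDerivAt.const_mul c).add_const d).fderiv
  have hdiff : DifferentiableAt ℝ (fderiv ℝ f) x :=
    (hf.fderiv_right (m := 1) (by norm_num)).differentiableAt (by simp)
  ext i j
  rw [Matrix.smul_apply, hessMat_apply, hessMat_apply, hfirst.fderiv_eq,
    (hdiff.hasFDerivAt.const_smul c).fderiv]
  rfl

theorem hessMat_posSemidef_of_isLocalMin (hf : ContDiffAt ℝ 2 f x) (hmin : IsLocalMin f x) :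
    (hessMat n f x).PosSemidef := by
  refine Matrix.PosSemidef.of_dotProduct_mulVec_nonneg ?_ fun ξ => ?_
  · rw [Matrix.IsHermitian, Matrix.conjTranspose_eq_transpose_of_trivial]
    exact hessMat_isSymm hf
  · refine (fderiv_fderiv_nonneg_of_isLocalMin hf hmin (∑ i, ξ i • ebasis n i)).trans_eq ?_
    simp only [dotProduct, Matrix.mulVec, star_trivial, hessMat_apply, map_sum, map_smul,
      sum_apply, smul_apply, smul_eq_mul, Finset.mul_sum]
    rw [Finset.sum_comm]
    exact Finset.sum_congr rfl fun i _ => Finset.sum_congr rfl fun j _ => by ring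

end Hessian

section Comparison

variable {n k : ℕ} {f g : Euc n → ℝ} {D D' K : Set (Euc n)}

/-- Classical admissible subsolutions of `S_k(D²f) = 1` on `D`: `C²`, `k`-convex and
`S_k(D²f) ≥ 1`. -/
structure IsSubsolution (n k : ℕ) (f : Euc n → ℝ) (D : Set (Euc n)) : Prop where
  contDiffAt : ∀ x ∈ D, ContDiffAt ℝ 2 f x
  kConvexOn : KConvexOn n k f D
  one_le : ∀ x ∈ D, 1 ≤ SkHess n k f x

/-- Classical supersolutions of `S_k(D²g) = 1` on `D`: `C²` and `S_k(D²g) ≤ 1`, with no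
convexity asked of `g`: the radial barriers solve `S_k(D²g) = 0`. -/
structure IsSupersolution (n k : ℕ) (g : Euc n → ℝ) (D : Set (Euc n)) : Prop where
  contDiffAt : ∀ x ∈ D, ContDiffAt ℝ 2 g x
  le_one : ∀ x ∈ D, SkHess n k g x ≤ 1

theorem IsSubsolution.mono (hf : IsSubsolution n k f D) (hD : D' ⊆ D) :
    IsSubsolution n k f D' where
  contDiffAt x hx := hf.contDiffAt x (hD hx)
  kConvexOn x hx := hf.kConvexOn x (hD hx)
  one_le x hx := hf.one_le x (hD hx)

theorem IsSupersolution.mono (hg : IsSupersolution n k g D) (hD : D' ⊆ D) :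
    IsSupersolution n k g D' where
  contDiffAt x hx := hg.contDiffAt x (hD hx)
  le_one x hx := hg.le_one x (hD hx)

/- At an interior minimum of `g - f` the matrix `D²g - D²f` is positive semidefinite, so
monotonicity of `S_k` on the Gårding cone gives `S_k(D²f) ≤ S_k(D²g)` there. -/
theorem le_of_SkHess_lt_of_le_on_diff (hk1 : 1 ≤ k) (hk : k ≤ n) (hD : IsOpen D) (hDK : D ⊆ K)
    (hK : IsCompact K) (hfK : ContinuousOn f K) (hgK : ContinuousOn g K)
    (hf : ∀ x ∈ D, ContDiffAt ℝ 2 f x) (hg : ∀ x ∈ D, ContDiffAt ℝ 2 g x)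
    (hconv : KConvexOn n k f D) (hlt : ∀ x ∈ D, SkHess n k g x < SkHess n k f x)
    (hbdry : ∀ x ∈ K \ D, f x ≤ g x) : ∀ x ∈ K, f x ≤ g x := by
  intro x hx
  obtain ⟨z, hz, hmin⟩ := hK.exists_isMinOn ⟨x, hx⟩ (hgK.sub hfK)
  suffices f z ≤ g z by
    have hzx : g z - f z ≤ g x - f x := hmin hx
    linarith
  refine hbdry z ⟨hz, fun hzD => ?_⟩
  have hloc : IsLocalMin (g - f) z := by
    filter_upwards [hD.mem_nhds hzD] with y hy using hmin (hDK hy)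
  have hpsd : (hessMat n g z - hessMat n f z).PosSemidef := by
    rw [← hessMat_sub (hg z hzD) (hf z hzD)]
    exact hessMat_posSemidef_of_isLocalMin ((hg z hzD).sub (hf z hzD)) hloc
  have hle := matSk_le_matSk_add_of_posSemidef hk1 hk (hessMat_isSymm (hf z hzD)) (hconv z hzD)
    hpsd
  rw [add_sub_cancel] at hle
  exact (hlt z hzD).not_ge hle

theorem IsSubsolution.SkHess_const_mul_add_const (hf : IsSubsolution n k f D) {j : ℕ}
    (hj : j ≤ n) (c d : ℝ) {x : Euc n} (hx : x ∈ D) :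
    SkHess n j (fun y => c * f y + d) x = c ^ j * SkHess n j f x := by
  rw [SkHess, hessMat_const_mul_add_const (hf.contDiffAt x hx), matSk_smul hj, SkHess]

/- Apply the strict comparison to `(1 + δ) f - δ max f` and let `δ → 0`. -/
theorem IsSubsolution.le_of_le_on_diff (hf : IsSubsolution n k f D)
    (hg : IsSupersolution n k g D) (hk1 : 1 ≤ k) (hk : k ≤ n) (hD : IsOpen D) (hDK : D ⊆ K)
    (hK : IsCompact K) (hfK : ContinuousOn f K) (hgK : ContinuousOn g K)
    (hbdry : ∀ x ∈ K \ D, f x ≤ g x) : ∀ x ∈ K, f x ≤ g x := by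
  intro x hx
  obtain ⟨m, hm⟩ := (hK.image_of_continuousOn hfK).bddAbove
  replace hm : ∀ y ∈ K, f y ≤ m := fun y hy => hm ⟨y, hy, rfl⟩
  have hperturbed : ∀ δ : ℝ, 0 < δ → (1 + δ) * f x + -δ * m ≤ g x := by
    intro δ hδ
    refine le_of_SkHess_lt_of_le_on_diff (f := fun y => (1 + δ) * f y + -δ * m) hk1 hk hD hDK hK
      ((continuousOn_const.mul hfK).add continuousOn_const) hgK
      (fun y hy => (contDiffAt_const.mul (hf.contDiffAt y hy)).add contDiffAt_const)
      hg.contDiffAt (fun y hy j hj hjk => ?_) (fun y hy => ?_) (fun y hy => ?_) x hx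
    · exact (mul_pos (by positivity) (hf.kConvexOn y hy j hj hjk)).trans_eq
        (hf.SkHess_const_mul_add_const (hjk.trans hk) _ _ hy).symm
    · rw [hf.SkHess_const_mul_add_const hk _ _ hy]
      have hpow : 1 < (1 + δ) ^ k := one_lt_pow₀ (by linarith) (by lia)
      nlinarith [hf.one_le y hy, hg.le_one y hy]
    · nlinarith [hbdry y hy, hm y hy.1]
  have hlim : Tendsto (fun δ : ℝ => (1 + δ) * f x + -δ * m) (𝓝[>] 0) (𝓝 (f x)) := by
    have hcont : Continuous fun δ : ℝ => (1 + δ) * f x + -δ * m := by fun_prop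
    simpa using (hcont.tendsto 0).mono_left nhdsWithin_le_nhds
  exact le_of_tendsto hlim (eventually_mem_nhdsWithin.mono hperturbed)

end Comparison

section BoundaryGradient

variable {E : Type*} [NormedAddCommGroup E] [NormedSpace ℝ E]

theorem exists_eq_smul_of_nonneg_on_halfSpace {f l : E →L[ℝ] ℝ} (hl : l ≠ 0)
    (h : ∀ v, 0 < l v → 0 ≤ f v) : ∃ c : ℝ, 0 ≤ c ∧ f = c • l := by
  obtain ⟨w, hw⟩ : ∃ w, l w = 1 := l.toLinearMap.surjective (by exact_mod_cast hl) 1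
  refine ⟨f w, h w (hw ▸ one_pos), ContinuousLinearMap.ext fun v => ?_⟩
  have hker : f (v - l v • w) = 0 := by
    by_contra hne
    have hnonneg := h (w + (-(f w + 1) / f (v - l v • w)) • (v - l v • w)) (by simp [hw])
    rw [map_add, map_smul, smul_eq_mul, div_mul_cancel₀ _ hne] at hnonneg
    linarith
  rw [map_sub, map_smul, smul_eq_mul, sub_eq_zero] at hker
  rw [smul_apply, smul_eq_mul, hker, mul_comm]

theorem exists_fderiv_eq_smul_of_le_on_superlevel {f g : E → ℝ} {x : E} {f' g' : E →L[ℝ] ℝ}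
    (hf : HasFDerivAt f f' x) (hg : HasFDerivAt g g' x) (hg' : g' ≠ 0)
    (h : ∀ᶠ y in 𝓝 x, g x < g y → f x ≤ f y) : ∃ c : ℝ, 0 ≤ c ∧ f' = c • g' := by
  refine exists_eq_smul_of_nonneg_on_halfSpace hg' fun v hv => ?_
  have hline : Tendsto (fun t : ℝ => x + t • v) (𝓝[>] 0) (𝓝 x) := by
    have hcont : Tendsto (fun t : ℝ => x + t • v) (𝓝 0) (𝓝 x) := by
      simpa using (hasDerivAt_add_smul x v 0).continuousAt.tendsto
    exact hcont.mono_left nhdsWithin_le_nhds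
  have hslope : ∀ {F : E → ℝ} {F' : E →L[ℝ] ℝ}, HasFDerivAt F F' x →
      Tendsto (fun t : ℝ => t⁻¹ * (F (x + t • v) - F x)) (𝓝[>] 0) (𝓝 (F' v)) := by
    intro F F' hF
    have hF0 : HasFDerivAt F F' (x + (0 : ℝ) • v) := by rwa [zero_smul, add_zero]
    simpa using (hF0.comp_hasDerivAt (0 : ℝ) (hasDerivAt_add_smul x v 0)).tendsto_slope_zero_right
  refine ge_of_tendsto (hslope hf) ?_
  filter_upwards [(hslope hg).eventually_const_lt hv, hline.eventually h, self_mem_nhdsWithin]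
    with t hgt hft ht
  have hinv : 0 < t⁻¹ := inv_pos.2 ht
  have hlt : g x < g (x + t • v) := sub_pos.1 (pos_of_mul_pos_right hgt hinv.le)
  exact mul_nonneg hinv.le (sub_nonneg.2 (hft hlt))

theorem exists_fderiv_eq_smul_of_between {u f₁ f₂ g : E → ℝ} {x : E} {u' g' : E →L[ℝ] ℝ}
    {c₁ c₂ : ℝ} (hu : HasFDerivAt u u' x) (hg : HasFDerivAt g g' x)
    (h₁ : HasFDerivAt f₁ (c₁ • g') x) (h₂ : HasFDerivAt f₂ (c₂ • g') x) (hg' : g' ≠ 0)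
    (hx₁ : f₁ x = u x) (hx₂ : f₂ x = u x)
    (h : ∀ᶠ y in 𝓝 x, g x < g y → f₁ y ≤ u y ∧ u y ≤ f₂ y) :
    ∃ τ : ℝ, c₁ ≤ τ ∧ τ ≤ c₂ ∧ u' = τ • g' := by
  obtain ⟨c, hc, huc⟩ : ∃ c : ℝ, 0 ≤ c ∧ u' - c₁ • g' = c • g' := by
    refine exists_fderiv_eq_smul_of_le_on_superlevel (hu.sub h₁) hg hg' ?_
    filter_upwards [h] with y hy hgy
    simpa [hx₁] using (hy hgy).1
  obtain ⟨d, hd, hud⟩ : ∃ d : ℝ, 0 ≤ d ∧ c₂ • g' - u' = d • g' := by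
    refine exists_fderiv_eq_smul_of_le_on_superlevel (h₂.sub hu) hg hg' ?_
    filter_upwards [h] with y hy hgy
    simpa [hx₂] using (hy hgy).2
  rw [sub_eq_iff_eq_add, ← add_smul] at huc
  have hcd : c₂ = d + (c + c₁) :=
    smul_left_injective ℝ hg' (by simp only; rw [add_smul, ← huc, ← hud]; abel)
  exact ⟨c + c₁, by linarith, by linarith, huc⟩

end BoundaryGradient

section DiagonalQuadratic

variable {n k : ℕ} (a : Fin n → ℝ) (z x : Euc n)

/-- The bilinear form `(v, w) ↦ vᵀ diag(a) w`. -/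
noncomputable def diagForm {n : ℕ} (a : Fin n → ℝ) : Euc n →L[ℝ] Euc n →L[ℝ] ℝ :=
  ∑ i, a i • (EuclideanSpace.proj i : Euc n →L[ℝ] ℝ).smulRight
    (EuclideanSpace.proj i : Euc n →L[ℝ] ℝ)

/-- The quadratic `x ↦ ½ (x - z)ᵀ diag(a) (x - z)` centred at `z`. -/
noncomputable def diagQuad {n : ℕ} (a : Fin n → ℝ) (z x : Euc n) : ℝ :=
  quadA n (Matrix.diagonal a) (x - z)

theorem diagForm_apply (v w : Euc n) : diagForm a v w = ∑ i, a i * v i * w i := by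
  simp [diagForm, sum_apply, mul_assoc]

theorem diagForm_comm (v w : Euc n) : diagForm a v w = diagForm a w v := by
  simp only [diagForm_apply, mul_right_comm]

theorem diagForm_ebasis (v : Euc n) (i : Fin n) : diagForm a v (ebasis n i) = a i * v i := by
  rw [diagForm_apply, Finset.sum_eq_single i]
  · simp [ebasis]
  · intro j _ hj
    simp [ebasis, hj]
  · simp

theorem diagForm_ebasis_ebasis (i j : Fin n) :
    diagForm a (ebasis n i) (ebasis n j) = Matrix.diagonal a i j := by
  rw [diagForm_comm, diagForm_ebasis, Matrix.diagonal_apply, ebasis, PiLp.single_apply]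
  split_ifs <;> simp

theorem diagQuad_eq_sum : diagQuad a z x = 1 / 2 * ∑ i, a i * (x - z) i ^ 2 := by
  rw [diagQuad, quadA]
  congr 1
  refine Finset.sum_congr rfl fun i _ => ?_
  rw [Finset.sum_eq_single i]
  · rw [Matrix.diagonal_apply_eq]
    ring
  · intro j _ hj
    simp [Matrix.diagonal_apply_ne' _ hj]
  · simp

theorem diagQuad_eq_diagForm : diagQuad a z x = 1 / 2 * diagForm a (x - z) (x - z) := by
  simp only [diagQuad_eq_sum, diagForm_apply, pow_two, mul_assoc]

theorem hasFDerivAt_diagForm_sub :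
    HasFDerivAt (fun y : Euc n => diagForm a (y - z)) (diagForm a) x :=
  (diagForm a).hasFDerivAt.comp x ((hasFDerivAt_id x).sub_const z)

theorem hasFDerivAt_diagQuad : HasFDerivAt (diagQuad a z) (diagForm a (x - z)) x := by
  rw [funext (diagQuad_eq_diagForm a z)]
  refine (((hasFDerivAt_diagForm_sub a z x).clm_apply
    ((hasFDerivAt_id x).sub_const z)).const_mul (1 / 2 : ℝ)).congr_fderiv ?_
  ext v
  have hcomm := diagForm_comm a v (x - z)
  change 1 / 2 * (diagForm a (x - z) v + diagForm a v (x - z)) = diagForm a (x - z) v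
  rw [hcomm]
  ring

theorem contDiff_diagQuad : ContDiff ℝ 2 (diagQuad a z) := by
  rw [funext (diagQuad_eq_diagForm a z)]
  have hsub : ContDiff ℝ 2 fun y : Euc n => y - z := contDiff_id.sub contDiff_const
  exact contDiff_const.mul (((diagForm a).contDiff.comp hsub).clm_apply hsub)

variable {z x} {φ : ℝ → ℝ}

theorem differentiableAt_deriv_of_contDiffAt_two {t : ℝ} (hφ : ContDiffAt ℝ 2 φ t) :
    DifferentiableAt ℝ (deriv φ) t := by
  have hderiv : deriv φ = fun s => fderiv ℝ φ s 1 := by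
    ext s
    exact fderiv_apply_one_eq_deriv.symm
  rw [hderiv]
  exact ((hφ.fderiv_right (m := 1) (by norm_num)).differentiableAt (by simp)).clm_apply
    (differentiableAt_const _)

theorem hessMat_comp_diagQuad (hφ : ContDiffAt ℝ 2 φ (diagQuad a z x)) :
    hessMat n (fun y => φ (diagQuad a z y)) x =
      Matrix.diagonal (deriv φ (diagQuad a z x) • a) + deriv (deriv φ) (diagQuad a z x) •
        Matrix.vecMulVec (fun i => a i * (x - z) i) (fun i => a i * (x - z) i) := by
  have hquad := hasFDerivAt_diagQuad a z x
  have hfirst : fderiv ℝ (fun y => φ (diagQuad a z y)) =ᶠ[𝓝 x]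
      fun y => deriv φ (diagQuad a z y) • diagForm a (y - z) := by
    filter_upwards [hquad.continuousAt.eventually (hφ.eventually (by simp))] with y hy
    exact ((hy.differentiableAt (by simp)).hasDerivAt.comp_hasFDerivAt y
      (hasFDerivAt_diagQuad a z y)).fderiv
  have hcoeff := (differentiableAt_deriv_of_contDiffAt_two hφ).hasDerivAt.comp_hasFDerivAt x hquad
  have hsecond : fderiv ℝ (fderiv ℝ fun y => φ (diagQuad a z y)) x = _ :=
    hfirst.fderiv_eq.trans (hcoeff.smul (hasFDerivAt_diagForm_sub a z x)).fderiv
  ext i j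
  rw [hessMat_apply, hsecond]
  simp only [add_apply, smul_apply, ContinuousLinearMap.smulRight_apply, smul_eq_mul,
    diagForm_ebasis_ebasis, diagForm_ebasis a (x - z), Matrix.add_apply, Matrix.smul_apply,
    Matrix.diagonal_smul, Matrix.vecMulVec_apply, Function.comp_apply]
  ring

theorem SkHess_comp_diagQuad (hk : k + 1 ≤ n) (hφ : ContDiffAt ℝ 2 φ (diagQuad a z x)) :
    SkHess n (k + 1) (fun y => φ (diagQuad a z y)) x =
      deriv φ (diagQuad a z x) ^ (k + 1) * esymmVec n (k + 1) a +
      deriv φ (diagQuad a z x) ^ k * deriv (deriv φ) (diagQuad a z x) *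
        ∑ i, (a i * (x - z) i) ^ 2 * esymmVec n k (Function.update a i 0) := by
  rw [SkHess, hessMat_comp_diagQuad a hφ, matSk_diagonal_add_smul_vecMulVec hk, esymmVec_smul]
  simp only [esymmVec_smul_update]
  congr 1
  rw [Finset.mul_sum, Finset.mul_sum]
  exact Finset.sum_congr rfl fun i _ => by ring

theorem contDiffAt_comp_diagQuad (hφ : ContDiffAt ℝ 2 φ (diagQuad a z x)) :
    ContDiffAt ℝ 2 (fun y => φ (diagQuad a z y)) x :=
  hφ.comp x (contDiff_diagQuad a z).contDiffAt

variable {a} {D : Set (Euc n)}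

/- For `φ'' ≤ 0` the Hessian is a negative rank-one perturbation of a positive definite matrix,
so positivity of `S_k` alone already forces `k`-convexity. -/
theorem isSubsolution_comp_diagQuad (ha : ∀ i, 0 < a i) (hk : k ≤ n)
    (hφ : ∀ x ∈ D, ContDiffAt ℝ 2 φ (diagQuad a z x))
    (hφ' : ∀ x ∈ D, 0 < deriv φ (diagQuad a z x))
    (hφ'' : ∀ x ∈ D, deriv (deriv φ) (diagQuad a z x) ≤ 0)
    (hSk : ∀ x ∈ D, 1 ≤ SkHess n k (fun y => φ (diagQuad a z y)) x) :
    IsSubsolution n k (fun y => φ (diagQuad a z y)) D where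
  contDiffAt x hx := contDiffAt_comp_diagQuad a (hφ x hx)
  kConvexOn x hx := by
    have hpos := zero_lt_one.trans_le (hSk x hx)
    rw [SkHess, hessMat_comp_diagQuad a (hφ x hx)] at hpos
    rw [hessMat_comp_diagQuad a (hφ x hx)]
    exact diagonal_add_smul_vecMulVec_mem_gardingCone hk
      (fun i => mul_pos (hφ' x hx) (ha i)) _ (hφ'' x hx) hpos
  one_le := hSk

theorem hessMat_diagQuad (a : Fin n → ℝ) (z x : Euc n) :
    hessMat n (diagQuad a z) x = Matrix.diagonal a := by
  simpa using hessMat_comp_diagQuad a (φ := id) (z := z) (x := x) contDiffAt_id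

theorem SkHess_affine_diagQuad (hk : k ≤ n) (a : Fin n → ℝ) (z x : Euc n) (m d : ℝ) :
    SkHess n k (fun y => m * diagQuad a z y + d) x = m ^ k * esymmVec n k a := by
  rw [SkHess, hessMat_const_mul_add_const (contDiff_diagQuad a z).contDiffAt, hessMat_diagQuad,
    matSk_smul hk, matSk_diagonal hk]

theorem contDiff_affine_diagQuad (a : Fin n → ℝ) (z : Euc n) (m d : ℝ) :
    ContDiff ℝ 2 fun y => m * diagQuad a z y + d :=
  (contDiff_const.mul (contDiff_diagQuad a z)).add contDiff_const

theorem hasFDerivAt_affine_diagQuad (a : Fin n → ℝ) (z x : Euc n) (m d : ℝ) :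
    HasFDerivAt (fun y => m * diagQuad a z y + d) (m • diagForm a (x - z)) x :=
  ((hasFDerivAt_diagQuad a z x).const_mul m).add_const d

theorem isSubsolution_affine_diagQuad (ha : ∀ i, 0 < a i) (hk : k ≤ n) {m : ℝ} (hm : 0 < m)
    (hSk : 1 ≤ m ^ k * esymmVec n k a) (z : Euc n) (d : ℝ) (D : Set (Euc n)) :
    IsSubsolution n k (fun y => m * diagQuad a z y + d) D where
  contDiffAt _ _ := (contDiff_affine_diagQuad a z m d).contDiffAt
  kConvexOn x _ j _ hjk := by
    have hj := hjk.trans hk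
    exact (mul_pos (pow_pos hm j) (esymmVec_pos hj ha)).trans_eq
      (SkHess_affine_diagQuad hj a z x m d).symm
  one_le x _ := by rwa [SkHess_affine_diagQuad hk]

theorem isSupersolution_affine_diagQuad (hk : k ≤ n) {m : ℝ} (hSk : m ^ k * esymmVec n k a ≤ 1)
    (z : Euc n) (d : ℝ) (D : Set (Euc n)) :
    IsSupersolution n k (fun y => m * diagQuad a z y + d) D where
  contDiffAt _ _ := (contDiff_affine_diagQuad a z m d).contDiffAt
  le_one x _ := by rwa [SkHess_affine_diagQuad hk]

end DiagonalQuadratic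

section Primitive

variable {g : ℝ → ℝ} {c t : ℝ}

theorem intervalIntegrable_of_continuousOn_Ioi (hg : ContinuousOn g (Set.Ioi 0)) (hc : 0 < c)
    (ht : 0 < t) : IntervalIntegrable g volume c t :=
  (hg.mono (Set.ordConnected_Ioi.uIcc_subset hc ht)).intervalIntegrable

theorem hasDerivAt_primitive (hg : ContinuousOn g (Set.Ioi 0)) (hc : 0 < c) (ht : 0 < t) :
    HasDerivAt (fun t => ∫ s in c..t, g s) (g t) t :=
  intervalIntegral.integral_hasDerivAt_right (intervalIntegrable_of_continuousOn_Ioi hg hc ht)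
    (hg.stronglyMeasurableAtFilter isOpen_Ioi t ht) (hg.continuousAt (Ioi_mem_nhds ht))

theorem deriv_deriv_primitive (hg : ContinuousOn g (Set.Ioi 0)) (hc : 0 < c) (ht : 0 < t) :
    deriv (deriv fun t => ∫ s in c..t, g s) t = deriv g t := by
  refine Filter.EventuallyEq.deriv_eq ?_
  filter_upwards [Ioi_mem_nhds ht] with s hs using (hasDerivAt_primitive hg hc hs).deriv

theorem contDiffAt_primitive (hg : ContDiffOn ℝ 1 g (Set.Ioi 0)) (hc : 0 < c) (ht : 0 < t) :
    ContDiffAt ℝ 2 (fun t => ∫ s in c..t, g s) t := by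
  have hderiv := fun s hs => hasDerivAt_primitive hg.continuousOn hc (t := s) hs
  have hon : ContDiffOn ℝ (1 + 1) (fun t => ∫ s in c..t, g s) (Set.Ioi 0) := by
    rw [contDiffOn_succ_iff_deriv_of_isOpen isOpen_Ioi]
    exact ⟨fun s hs => (hderiv s hs).differentiableAt.differentiableWithinAt, by simp,
      hg.congr fun s hs => (hderiv s hs).deriv⟩
  rw [← one_add_one_eq_two]
  exact hon.contDiffAt (Ioi_mem_nhds ht)

end Primitive

section MonotoneIntegral

variable {g : ℝ → ℝ} {c d : ℝ}

theorem intervalIntegral_bounds_of_antitoneOn (hg : AntitoneOn g (Set.Icc c d)) (hcd : c ≤ d) :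
    g d * (d - c) ≤ ∫ t in c..d, g t ∧ ∫ t in c..d, g t ≤ g c * (d - c) := by
  have hint : IntervalIntegrable g volume c d := by
    rw [← Set.uIcc_of_le hcd] at hg
    exact hg.intervalIntegrable
  have hlower := intervalIntegral.integral_mono_on hcd intervalIntegrable_const hint
    fun t ht => hg ht (Set.right_mem_Icc.2 hcd) ht.2
  have hupper := intervalIntegral.integral_mono_on hcd hint intervalIntegrable_const
    fun t ht => hg (Set.left_mem_Icc.2 hcd) ht ht.1
  simp only [intervalIntegral.integral_const, smul_eq_mul] at hlower hupper
  constructor <;> linarith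

end MonotoneIntegral

section GeneralizedSymmetric

variable {n k : ℕ} {a : Fin n → ℝ} {R₀ R α t : ℝ}

theorem esymmVec_update_mul_le_hkfun (k : ℕ) (a : Fin n → ℝ) (i : Fin n) :
    esymmVec n (k - 1) (Function.update a i 0) * a i ≤ hkfun n k a :=
  le_ciSup (f := fun i : Fin n => esymmVec n (k - 1) (Function.update a i 0) * a i)
    (Set.finite_range _).bddAbove i

theorem hkfun_pos (hk1 : 1 ≤ k) (hk : k ≤ n) (ha : ∀ i, 0 < a i) : 0 < hkfun n k a := by
  have i : Fin n := ⟨0, by lia⟩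
  exact (mul_pos (esymmVec_update_pos (by lia) ha i) (ha i)).trans_le
    (esymmVec_update_mul_le_hkfun k a i)

/- `S_k(a)|_{a_i = 0} + a_i S_{k-1}(a)|_{a_i = 0} = S_k(a) = 1`, so `h_k(a) ≤ 1`, with strict
inequality when `k < n`; only `k = 1` needs the bound on the `a_i`. -/
theorem two_mul_hkfun_lt (hn : 3 ≤ n) (hk1 : 1 ≤ k) (ha : ∀ i, 0 < a i)
    (hSk : esymmVec n k a = 1) (ha1 : k = 1 → ⨆ i, a i < 1 / 2) : 2 * hkfun n k a < k := by
  have : Nonempty (Fin n) := ⟨⟨0, by lia⟩⟩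
  obtain ⟨m, rfl⟩ : ∃ m, k = m + 1 := ⟨k - 1, by lia⟩
  obtain ⟨i, hi⟩ := exists_eq_ciSup_of_finite
    (f := fun i : Fin n => esymmVec n m (Function.update a i 0) * a i)
  have hrec := esymmVec_succ_eq_update m a i
  rw [hSk] at hrec
  rw [hkfun, Nat.add_sub_cancel, ← hi]
  have hnonneg : 0 ≤ esymmVec n (m + 1) (Function.update a i 0) :=
    esymmVec_update_nonneg _ (fun j => (ha j).le) i
  rcases lt_trichotomy m 1 with hm | rfl | hm
  · obtain rfl : m = 0 := by lia
    have hle : a i ≤ ⨆ i, a i := le_ciSup (Set.finite_range a).bddAbove i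
    rw [esymmVec_zero]
    push_cast
    linarith [ha1 rfl]
  · have hpos : 0 < esymmVec n (1 + 1) (Function.update a i 0) := esymmVec_update_pos hn ha i
    push_cast
    linarith
  · have : (2 : ℝ) ≤ m := by exact_mod_cast hm
    push_cast
    linarith

theorem genExp_lt_neg_one (hpos : 0 < hkfun n k a) (hlt : 2 * hkfun n k a < k) :
    genExp n k a < -1 := by
  rw [genExp, div_lt_iff₀ (by positivity)]
  linarith

theorem one_le_genInt (hα : 0 ≤ α) (ht : 0 ≤ t) : 1 ≤ genInt n k a α t :=
  one_le_rpow (le_add_of_nonneg_right (mul_nonneg hα (rpow_nonneg ht _))) (by positivity)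

theorem genInt_pow (hk1 : 1 ≤ k) (hα : 0 ≤ α) (ht : 0 ≤ t) :
    genInt n k a α t ^ k = 1 + α * t ^ genExp n k a := by
  rw [genInt, one_div,
    rpow_inv_natCast_pow (add_nonneg zero_le_one (mul_nonneg hα (rpow_nonneg ht _))) (by lia)]

theorem contDiffOn_genInt (hα : 0 ≤ α) : ContDiffOn ℝ 1 (genInt n k a α) (Set.Ioi 0) := by
  intro t ht
  have hpow : 0 ≤ t ^ genExp n k a := rpow_nonneg (Set.mem_Ioi.1 ht).le _
  exact (ContDiffAt.rpow_const_of_ne (contDiffAt_const.add (contDiffAt_const.mul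
    (contDiffAt_id.rpow_const_of_ne (ne_of_gt ht)))) (by positivity)).contDiffWithinAt

theorem antitoneOn_genInt (hE : genExp n k a ≤ 0) (hα : 0 ≤ α) :
    AntitoneOn (genInt n k a α) (Set.Ioi 0) := by
  intro s hs t ht hst
  have hpow : 0 ≤ t ^ genExp n k a := rpow_nonneg (Set.mem_Ioi.1 ht).le _
  have hle : t ^ genExp n k a ≤ s ^ genExp n k a := rpow_le_rpow_of_nonpos hs hst hE
  rw [genInt, genInt]
  gcongr

/- Differentiate `genInt ^ k = 1 + α t ^ genExp` and use `2 h_k genExp = -k`. -/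
theorem genInt_pow_mul_deriv (hk1 : 1 ≤ k) (hpos : 0 < hkfun n k a) (hα : 0 ≤ α) (ht : 0 < t) :
    genInt n k a α t ^ (k - 1) * deriv (genInt n k a α) t * (2 * hkfun n k a * t) =
      -(α * t ^ genExp n k a) := by
  have hk0 : (k : ℝ) ≠ 0 := by exact_mod_cast (zero_lt_one.trans_le hk1).ne'
  have hdiff : DifferentiableAt ℝ (genInt n k a α) t :=
    ((contDiffOn_genInt hα).contDiffAt (Ioi_mem_nhds ht)).differentiableAt one_ne_zero
  have hpow : genInt n k a α ^ k =ᶠ[𝓝 t] fun s => 1 + α * s ^ genExp n k a := by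
    filter_upwards [Ioi_mem_nhds ht] with s hs using genInt_pow hk1 hα (Set.mem_Ioi.1 hs).le
  have hderiv : k * genInt n k a α t ^ (k - 1) * deriv (genInt n k a α) t =
      α * (genExp n k a * t ^ (genExp n k a - 1)) :=
    (hdiff.hasDerivAt.pow k).unique
      ((((hasDerivAt_rpow_const (Or.inl ht.ne')).const_mul α).const_add 1).congr_of_eventuallyEq
        hpow)
  have hexp : genExp n k a * (2 * hkfun n k a) = -k := by
    rw [genExp]
    field_simp
  have ht_pow : t ^ (genExp n k a - 1) * t = t ^ genExp n k a := by
    rw [rpow_sub_one ht.ne', div_mul_cancel₀ _ ht.ne']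
  refine mul_left_cancel₀ hk0 ?_
  linear_combination (2 * hkfun n k a * t) * hderiv +
    α * t ^ (genExp n k a - 1) * t * hexp - α * k * ht_pow

theorem deriv_genInt_nonpos (hE : genExp n k a ≤ 0) (hα : 0 ≤ α) (ht : 0 < t) :
    deriv (genInt n k a α) t ≤ 0 := by
  rw [← derivWithin_of_isOpen isOpen_Ioi ht]
  exact (antitoneOn_genInt hE hα).derivWithin_nonpos

theorem sum_sq_mul_esymmVec_update_le (k : ℕ) (ha : ∀ i, 0 ≤ a i) (z x : Euc n) :
    ∑ i, (a i * (x - z) i) ^ 2 * esymmVec n (k - 1) (Function.update a i 0) ≤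
      2 * hkfun n k a * diagQuad a z x := by
  have hquad : 2 * hkfun n k a * diagQuad a z x = hkfun n k a * ∑ i, a i * (x - z) i ^ 2 := by
    rw [diagQuad_eq_sum]
    ring
  rw [hquad, Finset.mul_sum]
  refine Finset.sum_le_sum fun i _ => ?_
  calc (a i * (x - z) i) ^ 2 * esymmVec n (k - 1) (Function.update a i 0)
      = esymmVec n (k - 1) (Function.update a i 0) * a i * (a i * (x - z) i ^ 2) := by ring
    _ ≤ hkfun n k a * (a i * (x - z) i ^ 2) :=
      mul_le_mul_of_nonneg_right (esymmVec_update_mul_le_hkfun k a i)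
        (mul_nonneg (ha i) (sq_nonneg _))

theorem ubar_eq_comp_diagQuad (n k : ℕ) (a : Fin n → ℝ) (R₀ α : ℝ) :
    ubar n k a R₀ α = fun x => (fun t => ∫ s in R₀..t, genInt n k a α s) (diagQuad a 0 x) := by
  ext x
  rw [ubar, diagQuad, sub_zero]

theorem isSubsolution_ubar (hk1 : 1 ≤ k) (hk : k ≤ n) (ha : ∀ i, 0 < a i)
    (hSk : esymmVec n k a = 1) (hR₀ : 0 < R₀) (hα : 0 ≤ α) :
    IsSubsolution n k (ubar n k a R₀ α) {x | 0 < diagQuad a 0 x} := by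
  have hpos := hkfun_pos hk1 hk ha
  have hE : genExp n k a ≤ 0 :=
    div_nonpos_of_nonpos_of_nonneg (neg_nonpos.2 k.cast_nonneg) (by positivity)
  have hg := contDiffOn_genInt (n := n) (k := k) (a := a) hα
  have hderiv := fun t ht => (hasDerivAt_primitive hg.continuousOn hR₀ (t := t) ht).deriv
  have hderiv2 := fun t ht => deriv_deriv_primitive hg.continuousOn hR₀ (t := t) ht
  rw [ubar_eq_comp_diagQuad]
  refine isSubsolution_comp_diagQuad ha hk (fun x hx => contDiffAt_primitive hg hR₀ hx)
    ?_ ?_ ?_ <;> intro x (hx : 0 < diagQuad a 0 x)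
  · rw [hderiv _ hx]
    exact zero_lt_one.trans_le (one_le_genInt hα hx.le)
  · rw [hderiv2 _ hx]
    exact deriv_genInt_nonpos hE hα hx
  · obtain ⟨m, rfl⟩ : ∃ m, k = m + 1 := ⟨k - 1, by lia⟩
    have hode := genInt_pow_mul_deriv hk1 hpos hα hx
    have hcoef : genInt n (m + 1) a α (diagQuad a 0 x) ^ m *
        deriv (genInt n (m + 1) a α) (diagQuad a 0 x) ≤ 0 :=
      mul_nonpos_of_nonneg_of_nonpos (pow_nonneg (zero_le_one.trans (one_le_genInt hα hx.le)) m)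
        (deriv_genInt_nonpos hE hα hx)
    have hmul := mul_le_mul_of_nonpos_left
      (sum_sq_mul_esymmVec_update_le (m + 1) (fun i => (ha i).le) 0 x) hcoef
    rw [Nat.add_sub_cancel] at hode hmul
    rw [SkHess_comp_diagQuad a hk (contDiffAt_primitive hg hR₀ hx), hderiv _ hx, hderiv2 _ hx,
      hSk, genInt_pow hk1 hα hx.le]
    linarith

end GeneralizedSymmetric

section OuterBoundaryValue

variable {n k : ℕ} {a : Fin n → ℝ} {R₀ R α c d : ℝ}

theorem intervalIntegrable_genInt (hα : 0 ≤ α) (hc : 0 < c) (hd : 0 < d) :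
    IntervalIntegrable (genInt n k a α) volume c d :=
  intervalIntegrable_of_continuousOn_Ioi (contDiffOn_genInt hα).continuousOn hc hd

theorem antitoneOn_genInt_Icc (hE : genExp n k a ≤ 0) (hα : 0 ≤ α) (hc : 0 < c) :
    AntitoneOn (genInt n k a α) (Set.Icc c d) :=
  (antitoneOn_genInt hE hα).mono fun _ ht => hc.trans_le ht.1

theorem exists_forall_le_genInt (hk1 : 1 ≤ k) (a : Fin n → ℝ) {t : ℝ} (ht : 0 < t) (Q : ℝ) :
    ∃ α₀ : ℝ, 0 < α₀ ∧ ∀ α, α₀ ≤ α → Q ≤ genInt n k a α t := by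
  have hpow : 0 < t ^ genExp n k a := rpow_pos_of_pos ht _
  have hα₀ : 0 < (|Q| ^ k + 1) / t ^ genExp n k a := by positivity
  refine ⟨_, hα₀, fun α hα => ?_⟩
  have hα0 : 0 ≤ α := hα₀.le.trans hα
  rw [div_le_iff₀ hpow] at hα
  refine (le_abs_self Q).trans (le_of_pow_le_pow_left₀ (n := k) (by lia)
    (zero_le_one.trans (one_le_genInt hα0 ht.le)) ?_)
  rw [genInt_pow hk1 hα0 ht.le]
  linarith

theorem exists_forall_le_integral_genInt (hk1 : 1 ≤ k) (hE : genExp n k a ≤ 0) (hc : 0 < c)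
    (hcd : c < d) (Q : ℝ) :
    ∃ α₀ : ℝ, 0 < α₀ ∧ ∀ α, α₀ ≤ α → Q ≤ ∫ t in c..d, genInt n k a α t := by
  have hdc : 0 < d - c := sub_pos.2 hcd
  obtain ⟨α₀, hα₀, hle⟩ := exists_forall_le_genInt hk1 a (hc.trans hcd) (Q / (d - c))
  refine ⟨α₀, hα₀, fun α hα => ?_⟩
  have hQ := (div_le_iff₀ hdc).1 (hle α hα)
  exact hQ.trans (intervalIntegral_bounds_of_antitoneOn
    (antitoneOn_genInt_Icc hE (hα₀.le.trans hα) hc) hcd.le).1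

theorem sub_le_integral_genInt (hα : 0 ≤ α) (hc : 0 < c) (hcd : c ≤ d) :
    d - c ≤ ∫ t in c..d, genInt n k a α t := by
  have hle := intervalIntegral.integral_mono_on hcd intervalIntegrable_const
    (intervalIntegrable_genInt hα hc (hc.trans_le hcd))
    fun t ht => one_le_genInt (n := n) (k := k) (a := a) hα (hc.le.trans ht.1)
  simpa using hle

theorem le_integral_genInt (hα : 0 ≤ α) (hc : 0 < c) (hd : 0 < d) {t : ℝ} (hdt : d ≤ t)
    (hle : d ≤ ∫ s in c..d, genInt n k a α s) : t ≤ ∫ s in c..t, genInt n k a α s := by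
  rw [← intervalIntegral.integral_add_adjacent_intervals (intervalIntegrable_genInt hα hc hd)
    (intervalIntegrable_genInt hα hd (hd.trans_le hdt))]
  linarith [sub_le_integral_genInt (n := n) (k := k) (a := a) hα hd hdt]

theorem integral_genInt_le_mul (hE : genExp n k a ≤ 0) (hα : 0 ≤ α) (hc : 0 < c) (hcd : c ≤ d) :
    ∫ t in c..d, genInt n k a α t ≤ genInt n k a α c * d := by
  have hle := (intervalIntegral_bounds_of_antitoneOn (antitoneOn_genInt_Icc hE hα hc) hcd).2
  nlinarith [one_le_genInt (n := n) (k := k) (a := a) hα hc.le]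

/- `genInt ≤ 1 + α t ^ genExp`, and `genExp < -1` makes the tail integrable. -/
theorem integral_genInt_le_add (hk1 : 1 ≤ k) (hE : genExp n k a < -1) (hα : 0 ≤ α) (hc : 0 < c)
    (hcd : c ≤ d) : ∫ t in c..d, genInt n k a α t ≤
      d + α * (c ^ (genExp n k a + 1) / -(genExp n k a + 1)) := by
  set e := genExp n k a
  have h0 : (0 : ℝ) ∉ Set.uIcc c d := fun h =>
    lt_irrefl 0 (Set.ordConnected_Ioi.uIcc_subset hc (hc.trans_le hcd) h)
  have hrpow : IntervalIntegrable (fun t : ℝ => t ^ e) volume c d :=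
    intervalIntegral.intervalIntegrable_rpow (Or.inr h0)
  have hpointwise : ∀ t ∈ Set.Icc c d, genInt n k a α t ≤ 1 + α * t ^ e := fun t ht => by
    have hbase : 1 ≤ 1 + α * t ^ e :=
      le_add_of_nonneg_right (mul_nonneg hα (rpow_nonneg (hc.le.trans ht.1) _))
    exact rpow_le_self_of_one_le hbase
      ((div_le_one (by exact_mod_cast hk1)).2 (by exact_mod_cast hk1))
  have hrpow_le : ∫ t in c..d, t ^ e ≤ c ^ (e + 1) / -(e + 1) := by
    rw [integral_rpow (Or.inr ⟨by linarith, h0⟩), ← neg_div_neg_eq, neg_sub]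
    have hd : 0 ≤ d ^ (e + 1) := rpow_nonneg (hc.le.trans hcd) _
    gcongr <;> linarith
  calc ∫ t in c..d, genInt n k a α t
      ≤ ∫ t in c..d, (1 + α * t ^ e) :=
        intervalIntegral.integral_mono_on hcd
          (intervalIntegrable_genInt hα hc (hc.trans_le hcd))
          (intervalIntegrable_const.add (hrpow.const_mul α)) hpointwise
    _ = (d - c) + α * ∫ t in c..d, t ^ e := by
        rw [intervalIntegral.integral_add intervalIntegrable_const (hrpow.const_mul α),
          intervalIntegral.integral_const_mul, intervalIntegral.integral_const, smul_eq_mul,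
          mul_one]
    _ ≤ d + α * (c ^ (e + 1) / -(e + 1)) :=
        add_le_add (by linarith) (mul_le_mul_of_nonneg_left hrpow_le hα)

end OuterBoundaryValue

section RadialBarrier

variable {n k : ℕ} {m s c ε : ℝ}

/-- The derivative `m (2s)^(-n/(2k))` of the profile of the radial solutions of `S_k(D²w) = 0`, in
the variable `s = |x - z|² / 2`. -/
noncomputable def radialProfile (n k : ℕ) (m s : ℝ) : ℝ := m * (2 * s) ^ (-(n : ℝ) / (2 * k))

theorem radialProfile_nonneg (hm : 0 ≤ m) (hs : 0 ≤ s) : 0 ≤ radialProfile n k m s :=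
  mul_nonneg hm (rpow_nonneg (by linarith) _)

theorem hasDerivAt_radialProfile (hs : 0 < s) :
    HasDerivAt (radialProfile n k m) (-(n : ℝ) / (2 * k) * radialProfile n k m s / s) s := by
  have h2s : 0 < 2 * s := by positivity
  have hlin : HasDerivAt (fun s : ℝ => 2 * s) 2 s := by simpa using (hasDerivAt_id s).const_mul 2
  refine ((hlin.rpow_const (p := -(n : ℝ) / (2 * k)) (Or.inl h2s.ne')).const_mul m).congr_deriv ?_
  rw [rpow_sub_one h2s.ne', radialProfile]
  field_simp

theorem contDiffOn_radialProfile : ContDiffOn ℝ 1 (radialProfile n k m) (Set.Ioi 0) := by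
  intro s (hs : 0 < s)
  have h2s : 2 * s ≠ 0 := by positivity
  exact (contDiffAt_const.mul
    ((contDiffAt_const.mul contDiffAt_id).rpow_const_of_ne h2s)).contDiffWithinAt

theorem diagQuad_one (z x : Euc n) : diagQuad 1 z x = ‖x - z‖ ^ 2 / 2 := by
  rw [diagQuad_eq_sum, EuclideanSpace.norm_sq_eq]
  simp only [Pi.one_apply, one_mul, norm_eq_abs, sq_abs]
  ring

theorem sum_sq_mul_esymmVec_one_update (j : ℕ) (z x : Euc n) :
    ∑ i, ((1 : Fin n → ℝ) i * (x - z) i) ^ 2 *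
      esymmVec n j (Function.update (1 : Fin n → ℝ) i 0) =
      2 * diagQuad 1 z x * ((n - 1).choose j : ℝ) := by
  simp only [esymmVec_one_update, Pi.one_apply, one_mul]
  rw [← Finset.sum_mul, diagQuad_eq_sum]
  simp only [Pi.one_apply, one_mul]
  ring

/- The exponent is chosen so that `S_k(D²w) = 0`, by `k C(n, k) = n C(n-1, k-1)`. -/
theorem isSupersolution_radial (hk1 : 1 ≤ k) (hk : k ≤ n) (hc : 0 < c) (m : ℝ) (z : Euc n) :
    IsSupersolution n k (fun x => (fun t => ∫ s in c..t, radialProfile n k m s) (diagQuad 1 z x))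
      {x | 0 < diagQuad 1 z x} where
  contDiffAt _ hx :=
    contDiffAt_comp_diagQuad 1 (contDiffAt_primitive contDiffOn_radialProfile hc hx)
  le_one x (hx : 0 < diagQuad 1 z x) := by
    obtain ⟨j, rfl⟩ : ∃ j, k = j + 1 := ⟨k - 1, by lia⟩
    obtain ⟨l, rfl⟩ : ∃ l, n = l + 1 := ⟨n - 1, by lia⟩
    have hcont := contDiffOn_radialProfile (n := l + 1) (k := j + 1) (m := m)
    have hchoose : ((l + 1 : ℕ) : ℝ) * l.choose j =
        (l + 1).choose (j + 1) * ((j + 1 : ℕ) : ℝ) := by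
      exact_mod_cast Nat.add_one_mul_choose_eq l j
    refine le_of_eq_of_le ?_ zero_le_one
    rw [SkHess_comp_diagQuad 1 hk (contDiffAt_primitive hcont hc hx),
      (hasDerivAt_primitive hcont.continuousOn hc hx).deriv,
      deriv_deriv_primitive hcont.continuousOn hc hx, (hasDerivAt_radialProfile hx).deriv,
      esymmVec_one, sum_sq_mul_esymmVec_one_update, Nat.add_sub_cancel]
    field_simp
    linear_combination
      (-1 : ℝ) * radialProfile (l + 1) (j + 1) m (diagQuad 1 z x) ^ (j + 1) * hchoose

theorem radialProfile_sq_div_two_mul_self (hk1 : 1 ≤ k) (hε : 0 < ε) (m : ℝ) :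
    radialProfile n k m (ε ^ 2 / 2) * ε = m * ε ^ (1 - (n : ℝ) / k) := by
  have hk0 : (k : ℝ) ≠ 0 := by exact_mod_cast (zero_lt_one.trans_le hk1).ne'
  rw [radialProfile, mul_div_cancel₀ _ two_ne_zero, ← rpow_natCast ε 2, ← rpow_mul hε.le, mul_assoc,
    ← rpow_add_one hε.ne']
  congr 2
  push_cast
  field_simp
  ring

theorem integral_radialProfile (m ε : ℝ) :
    ∫ s in (ε ^ 2 / 2)..(1 / 2), radialProfile n k m s =
      m * (2⁻¹ * ∫ s in (ε ^ 2)..1, s ^ (-(n : ℝ) / (2 * k))) := by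
  have hsub := intervalIntegral.integral_comp_mul_left (a := ε ^ 2 / 2) (b := 1 / 2)
    (fun s : ℝ => s ^ (-(n : ℝ) / (2 * k))) two_ne_zero
  simp only [radialProfile]
  rw [intervalIntegral.integral_const_mul, hsub, mul_div_cancel₀ _ two_ne_zero,
    mul_div_cancel₀ _ two_ne_zero, smul_eq_mul]

theorem zero_notMem_uIcc_sq_one (hε : 0 < ε) : (0 : ℝ) ∉ Set.uIcc (ε ^ 2) 1 := fun h =>
  lt_irrefl 0 (Set.ordConnected_Ioi.uIcc_subset (pow_pos hε 2) (zero_lt_one (α := ℝ)) h)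

theorem integral_radialProfile_of_ne (hk1 : 1 ≤ k) (hn : n ≠ 2 * k) (hε : 0 < ε) (m : ℝ) :
    ∫ s in (ε ^ 2 / 2)..(1 / 2), radialProfile n k m s =
      m * ((1 - ε ^ (2 - (n : ℝ) / k)) / (2 - n / k)) := by
  have hk0 : (k : ℝ) ≠ 0 := by exact_mod_cast (zero_lt_one.trans_le hk1).ne'
  have hp : 2 - (n : ℝ) / k ≠ 0 := by
    rw [sub_ne_zero, ne_comm, Ne, div_eq_iff hk0]
    exact_mod_cast hn
  have hexp : -(n : ℝ) / (2 * k) + 1 = (2 - n / k) / 2 := by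
    field_simp
    ring
  have hne : -(n : ℝ) / (2 * k) ≠ -1 := fun h => hp (by linarith)
  rw [integral_radialProfile, integral_rpow (Or.inr ⟨hne, zero_notMem_uIcc_sq_one hε⟩), one_rpow,
    ← rpow_natCast ε 2, ← rpow_mul hε.le, hexp]
  push_cast
  rw [mul_div_cancel₀ _ two_ne_zero]
  field_simp

theorem integral_radialProfile_two_mul (hk1 : 1 ≤ k) (hε : 0 < ε) (m : ℝ) :
    ∫ s in (ε ^ 2 / 2)..(1 / 2), radialProfile (2 * k) k m s = m * -log ε := by
  have hk0 : (k : ℝ) ≠ 0 := by exact_mod_cast (zero_lt_one.trans_le hk1).ne'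
  have hexp : -((2 * k : ℕ) : ℝ) / (2 * k) = -1 := by
    push_cast
    field_simp
  simp only [integral_radialProfile, hexp, rpow_neg_one]
  rw [integral_inv (zero_notMem_uIcc_sq_one hε), one_div, log_inv, log_pow]
  push_cast
  ring

theorem Ceps_mul (c C ε : ℝ) : Ceps n k (c * C) ε = c * Ceps n k C ε := by
  simp only [Ceps]
  split_ifs <;> ring

theorem Ceps_le_Ceps (hk1 : 1 ≤ k) (hε : 0 ≤ ε) {C C' : ℝ} (hC : C ≤ C') :
    Ceps n k C ε ≤ Ceps n k C' ε := by
  have hk0 : (0 : ℝ) < k := by exact_mod_cast hk1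
  simp only [Ceps]
  split_ifs with hlt heq
  · have hp : 0 ≤ (n : ℝ) / k - 2 := by
      rw [sub_nonneg, le_div_iff₀ hk0]
      exact_mod_cast hlt.le
    gcongr
  · gcongr
  · have hp : 0 ≤ 2 - (n : ℝ) / k := by
      rw [sub_nonneg, div_le_iff₀ hk0]
      exact_mod_cast not_lt.1 hlt
    gcongr

theorem half_rpow_lt_one {p : ℝ} (hp : 0 < p) : (1 / 2 : ℝ) ^ p < 1 :=
  rpow_lt_one (by norm_num) (by norm_num) hp

theorem rpow_le_Ceps_mul_integral_of_two_mul_lt (hk1 : 1 ≤ k) (hlt : 2 * k < n) :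
    ∃ C : ℝ, 0 < C ∧ ∀ ε : ℝ, 0 < ε → ε < 1 / 2 →
      0 < ∫ s in (ε ^ 2 / 2)..(1 / 2), radialProfile n k 1 s ∧
      ε ^ (1 - (n : ℝ) / k) ≤
        Ceps n k C ε * ∫ s in (ε ^ 2 / 2)..(1 / 2), radialProfile n k 1 s := by
  have hk0 : (0 : ℝ) < k := by exact_mod_cast hk1
  obtain ⟨p, hp⟩ : ∃ p : ℝ, p = (n : ℝ) / k - 2 := ⟨_, rfl⟩
  have hp0 : 0 < p := by
    rw [hp, sub_pos, lt_div_iff₀ hk0]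
    exact_mod_cast hlt
  have hhalf := sub_pos.2 (half_rpow_lt_one hp0)
  refine ⟨(1 - (1 / 2 : ℝ) ^ p)⁻¹, inv_pos.2 hhalf, fun ε hε hε2 => ?_⟩
  have hle : ε ^ p ≤ (1 / 2 : ℝ) ^ p := rpow_le_rpow hε.le hε2.le hp0.le
  have hint : ∫ s in (ε ^ 2 / 2)..(1 / 2), radialProfile n k 1 s = (1 - ε ^ p) / (p * ε ^ p) := by
    rw [integral_radialProfile_of_ne hk1 hlt.ne' hε, one_mul,
      show 2 - (n : ℝ) / k = -p by linarith, rpow_neg hε.le]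
    field_simp
    ring
  have hpow : ε ^ (1 - (n : ℝ) / k) = (ε ^ p * ε)⁻¹ := by
    rw [show 1 - (n : ℝ) / k = -(p + 1) by linarith, rpow_neg hε.le, rpow_add_one hε.ne']
  rw [hint]
  refine ⟨div_pos (by linarith) (by positivity), ?_⟩
  rw [hpow, Ceps, if_pos hlt, ← hp]
  calc (ε ^ p * ε)⁻¹ = 1 * (ε ^ p * ε)⁻¹ := (one_mul _).symm
    _ ≤ (1 - ε ^ p) / (1 - (1 / 2 : ℝ) ^ p) * (ε ^ p * ε)⁻¹ := by
      gcongr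
      exact (one_le_div hhalf).2 (by linarith)
    _ = (1 - (1 / 2 : ℝ) ^ p)⁻¹ * p * ε⁻¹ * ((1 - ε ^ p) / (p * ε ^ p)) := by
      field_simp

theorem rpow_le_Ceps_mul_integral_of_eq_two_mul (hk1 : 1 ≤ k) (heq : n = 2 * k) :
    ∀ ε : ℝ, 0 < ε → ε < 1 / 2 →
      0 < ∫ s in (ε ^ 2 / 2)..(1 / 2), radialProfile n k 1 s ∧
      ε ^ (1 - (n : ℝ) / k) ≤
        Ceps n k 1 ε * ∫ s in (ε ^ 2 / 2)..(1 / 2), radialProfile n k 1 s := by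
  intro ε hε hε2
  have hk0 : (k : ℝ) ≠ 0 := by exact_mod_cast (zero_lt_one.trans_le hk1).ne'
  have hlog : log ε < 0 := log_neg hε (by linarith)
  have hpow : ε ^ (1 - (n : ℝ) / k) = ε⁻¹ := by
    rw [heq, ← rpow_neg_one]
    congr 1
    push_cast
    field_simp
    norm_num
  rw [hpow]
  subst heq
  rw [integral_radialProfile_two_mul hk1 hε, one_mul, Ceps, if_neg (lt_irrefl _), if_pos rfl,
    abs_of_neg hlog, one_mul, mul_assoc, inv_mul_cancel₀ (neg_pos.2 hlog).ne', mul_one]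
  exact ⟨neg_pos.2 hlog, le_rfl⟩

theorem rpow_le_Ceps_mul_integral_of_lt_two_mul (hk1 : 1 ≤ k) (hlt : n < 2 * k) :
    ∃ C : ℝ, 0 < C ∧ ∀ ε : ℝ, 0 < ε → ε < 1 / 2 →
      0 < ∫ s in (ε ^ 2 / 2)..(1 / 2), radialProfile n k 1 s ∧
      ε ^ (1 - (n : ℝ) / k) ≤
        Ceps n k C ε * ∫ s in (ε ^ 2 / 2)..(1 / 2), radialProfile n k 1 s := by
  have hk0 : (0 : ℝ) < k := by exact_mod_cast hk1
  obtain ⟨p, hp⟩ : ∃ p : ℝ, p = 2 - (n : ℝ) / k := ⟨_, rfl⟩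
  have hp0 : 0 < p := by
    rw [hp, sub_pos, div_lt_iff₀ hk0]
    exact_mod_cast hlt
  have hhalf := sub_pos.2 (half_rpow_lt_one hp0)
  refine ⟨(1 - (1 / 2 : ℝ) ^ p)⁻¹, inv_pos.2 hhalf, fun ε hε hε2 => ?_⟩
  have hle : ε ^ p ≤ (1 / 2 : ℝ) ^ p := rpow_le_rpow hε.le hε2.le hp0.le
  rw [integral_radialProfile_of_ne hk1 hlt.ne hε, one_mul, ← hp, Ceps, if_neg hlt.not_gt,
    if_neg hlt.ne', ← hp]
  refine ⟨div_pos (by linarith) hp0, ?_⟩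
  calc ε ^ (1 - (n : ℝ) / k) = 1 * ε ^ (1 - (n : ℝ) / k) := (one_mul _).symm
    _ ≤ (1 - ε ^ p) / (1 - (1 / 2 : ℝ) ^ p) * ε ^ (1 - (n : ℝ) / k) := by
      gcongr
      exact (one_le_div hhalf).2 (by linarith)
    _ = (1 - (1 / 2 : ℝ) ^ p)⁻¹ * p * ε ^ (1 - (n : ℝ) / k) * ((1 - ε ^ p) / p) := by
      field_simp

theorem exists_le_integral_radialProfile (n : ℕ) (hk1 : 1 ≤ k) {K : ℝ} (hK : 0 < K) :
    ∃ C : ℝ, 0 < C ∧ ∀ ε : ℝ, 0 < ε → ε < 1 / 2 → ∃ m : ℝ, 0 < m ∧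
      K ≤ ∫ s in (ε ^ 2 / 2)..(1 / 2), radialProfile n k m s ∧
      radialProfile n k m (ε ^ 2 / 2) * ε ≤ Ceps n k C ε := by
  obtain ⟨C, hC, hest⟩ : ∃ C : ℝ, 0 < C ∧ ∀ ε : ℝ, 0 < ε → ε < 1 / 2 →
      0 < ∫ s in (ε ^ 2 / 2)..(1 / 2), radialProfile n k 1 s ∧
      ε ^ (1 - (n : ℝ) / k) ≤
        Ceps n k C ε * ∫ s in (ε ^ 2 / 2)..(1 / 2), radialProfile n k 1 s := by
    rcases lt_trichotomy (2 * k) n with hlt | heq | hgt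
    · exact rpow_le_Ceps_mul_integral_of_two_mul_lt hk1 hlt
    · exact ⟨1, one_pos, rpow_le_Ceps_mul_integral_of_eq_two_mul hk1 heq.symm⟩
    · exact rpow_le_Ceps_mul_integral_of_lt_two_mul hk1 hgt
  refine ⟨K * C, mul_pos hK hC, fun ε hε hε2 => ?_⟩
  obtain ⟨hpos, hle⟩ := hest ε hε hε2
  set I := ∫ s in (ε ^ 2 / 2)..(1 / 2), radialProfile n k 1 s with hI
  have hscale : ∫ s in (ε ^ 2 / 2)..(1 / 2), radialProfile n k (K / I) s = K := by
    rw [integral_radialProfile, one_mul] at hI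
    rw [integral_radialProfile, ← hI, div_mul_cancel₀ _ hpos.ne']
  refine ⟨K / I, div_pos hK hpos, hscale.ge, ?_⟩
  rw [radialProfile_sq_div_two_mul_self hk1 hε, Ceps_mul, div_mul_eq_mul_div, mul_div_assoc]
  exact mul_le_mul_of_nonneg_left ((div_le_iff₀ hpos).2 hle) hK.le

end RadialBarrier

section RingGeometry

variable {n : ℕ} {a : Fin n → ℝ} {l L ε R R₀ r : ℝ} {x₀ x : Euc n}

theorem norm_diagForm (a : Fin n → ℝ) (v : Euc n) : ‖diagForm a v‖ = √(∑ i, (a i * v i) ^ 2) := by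
  have hinner : diagForm a v = innerSL ℝ (WithLp.toLp 2 fun i => a i * v i : Euc n) := by
    ext w
    rw [diagForm_apply, innerSL_apply_apply, PiLp.inner_apply]
    simp [mul_comm]
  rw [hinner, innerSL_apply_norm, EuclideanSpace.norm_eq]
  simp only [norm_eq_abs, sq_abs]

theorem norm_diagForm_one (v : Euc n) : ‖diagForm 1 v‖ = ‖v‖ := by
  rw [norm_diagForm, EuclideanSpace.norm_eq]
  simp only [Pi.one_apply, one_mul, norm_eq_abs, sq_abs]

theorem two_mul_diagQuad (a : Fin n → ℝ) (z x : Euc n) :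
    2 * diagQuad a z x = ∑ i, a i * (x - z) i ^ 2 := by
  rw [diagQuad_eq_sum, ← mul_assoc, mul_one_div_cancel two_ne_zero, one_mul]

theorem diagQuad_mono {b : Fin n → ℝ} (hab : ∀ i, a i ≤ b i) (z x : Euc n) :
    diagQuad a z x ≤ diagQuad b z x := by
  rw [diagQuad_eq_sum, diagQuad_eq_sum]
  gcongr with i
  exact hab i

theorem diagQuad_const (c : ℝ) (z x : Euc n) :
    diagQuad (fun _ => c) z x = c / 2 * ‖x - z‖ ^ 2 := by
  rw [diagQuad_eq_sum, EuclideanSpace.norm_sq_eq, ← Finset.mul_sum]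
  simp only [norm_eq_abs, sq_abs]
  ring

theorem diagQuad_nonneg (ha : ∀ i, 0 ≤ a i) (z x : Euc n) : 0 ≤ diagQuad a z x := by
  have hmono := diagQuad_mono ha z x
  rwa [diagQuad_const, zero_div, zero_mul] at hmono

theorem half_mul_norm_sq_le_diagQuad (hl : ∀ i, l ≤ a i) (x : Euc n) :
    l / 2 * ‖x‖ ^ 2 ≤ diagQuad a 0 x := by
  simpa only [diagQuad_const, sub_zero] using diagQuad_mono hl 0 x

theorem diagQuad_le_half_mul_norm_sq (hL : ∀ i, a i ≤ L) (x : Euc n) :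
    diagQuad a 0 x ≤ L / 2 * ‖x‖ ^ 2 := by
  simpa only [diagQuad_const, sub_zero] using diagQuad_mono hL 0 x

theorem diagQuad_zero_smul (a : Fin n → ℝ) (c : ℝ) (x : Euc n) :
    diagQuad a 0 (c • x) = c ^ 2 * diagQuad a 0 x := by
  simp only [diagQuad_eq_diagForm, sub_zero, map_smul, smul_apply, smul_eq_mul]
  ring

theorem sqrt_mul_le_norm_diagForm (ha : ∀ i, 0 ≤ a i) (hl : ∀ i, l ≤ a i) (z x : Euc n) :
    √(l * (2 * diagQuad a z x)) ≤ ‖diagForm a (x - z)‖ := by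
  rw [norm_diagForm, two_mul_diagQuad, Finset.mul_sum]
  refine sqrt_le_sqrt (Finset.sum_le_sum fun i _ => ?_)
  rw [mul_pow, sq (a i), mul_assoc]
  exact mul_le_mul_of_nonneg_right (hl i) (mul_nonneg (ha i) (sq_nonneg _))

theorem norm_diagForm_le_sqrt_mul (ha : ∀ i, 0 ≤ a i) (hL : ∀ i, a i ≤ L) (z x : Euc n) :
    ‖diagForm a (x - z)‖ ≤ √(L * (2 * diagQuad a z x)) := by
  rw [norm_diagForm, two_mul_diagQuad, Finset.mul_sum]
  refine sqrt_le_sqrt (Finset.sum_le_sum fun i _ => ?_)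
  rw [mul_pow, sq (a i), mul_assoc]
  exact mul_le_mul_of_nonneg_right (hL i) (mul_nonneg (ha i) (sq_nonneg _))

theorem isCompact_of_diagQuad_le (ha : ∀ i, 0 < a i) {S : Set (Euc n)} (hS : IsClosed S)
    (hSR : ∀ x ∈ S, diagQuad a 0 x ≤ R) : IsCompact S := by
  obtain ⟨l, hl0, hl⟩ : ∃ l : ℝ, 0 < l ∧ ∀ i, l ≤ a i := by
    rcases isEmpty_or_nonempty (Fin n) with _ | _
    · exact ⟨1, one_pos, isEmptyElim⟩
    · obtain ⟨i, hi⟩ := Finite.exists_min a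
      exact ⟨a i, ha i, hi⟩
  refine Metric.isCompact_of_isClosed_isBounded hS
    ((Metric.isBounded_closedBall (x := (0 : Euc n)) (r := √(2 * R / l))).subset fun x hx => ?_)
  rw [mem_closedBall_zero_iff]
  refine le_sqrt_of_sq_le ?_
  rw [le_div_iff₀ hl0]
  linarith [half_mul_norm_sq_le_diagQuad hl x, hSR x hx]

theorem closedBall_subset_ESet (hL0 : 0 < L) (hL : ∀ i, a i ≤ L) (hLR : L ≤ R)
    (hx₀ : ‖x₀‖ < 1 / 2) (hε : ε < 1 / 2) :
    Metric.closedBall x₀ ε ⊆ ESet n (Matrix.diagonal a) 0 R := by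
  intro x hx
  have hnorm : ‖x‖ < 1 := by
    have hsub := norm_sub_norm_le x x₀
    rw [mem_closedBall_iff_norm] at hx
    linarith
  have hsq : ‖x‖ ^ 2 ≤ 1 := pow_le_one₀ (norm_nonneg x) hnorm.le
  change diagQuad a 0 x < R
  nlinarith [diagQuad_le_half_mul_norm_sq hL x]

theorem norm_sub_sq_le (hl0 : 0 < l) (hl : ∀ i, l ≤ a i) (hx₀ : ‖x₀‖ ≤ 1 / 2) (x : Euc n) :
    ‖x - x₀‖ ^ 2 ≤ 4 * diagQuad a 0 x / l + 1 / 2 := by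
  have hnorm : ‖x‖ ^ 2 ≤ 2 * diagQuad a 0 x / l := by
    rw [le_div_iff₀ hl0]
    linarith [half_mul_norm_sq_le_diagQuad hl x]
  calc ‖x - x₀‖ ^ 2 ≤ (‖x‖ + 1 / 2) ^ 2 := by
        gcongr
        exact (norm_sub_le x x₀).trans (by gcongr)
    _ ≤ 2 * ‖x‖ ^ 2 + 1 / 2 := by nlinarith [sq_nonneg (‖x‖ - 1 / 2)]
    _ ≤ 2 * (2 * diagQuad a 0 x / l) + 1 / 2 := by gcongr
    _ = 4 * diagQuad a 0 x / l + 1 / 2 := by ring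

theorem one_le_norm_sub (hL0 : 0 < L) (hL : ∀ i, a i ≤ L) (hx₀ : ‖x₀‖ ≤ 1 / 2)
    (hx : 2 * L ≤ diagQuad a 0 x) : 1 ≤ ‖x - x₀‖ := by
  have hsq : 2 ^ 2 ≤ ‖x‖ ^ 2 := by
    have hle := hx.trans (diagQuad_le_half_mul_norm_sq hL x)
    by_contra! hlt
    nlinarith
  have hnorm : 2 ≤ ‖x‖ := le_of_pow_le_pow_left₀ two_ne_zero (norm_nonneg x) hsq
  linarith [norm_sub_norm_le x x₀]

/-- The closed ring `Ē_R(0) ∖ B_ε(x₀)`, on which solutions of the approximating problem are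
compared with barriers. -/
def closedRing {n : ℕ} (a : Fin n → ℝ) (x₀ : Euc n) (ε R : ℝ) : Set (Euc n) :=
  {x | diagQuad a 0 x ≤ R ∧ ε ≤ ‖x - x₀‖}

theorem mem_OmegaRe_iff (hε : ε ≠ 0) :
    x ∈ OmegaRe n a x₀ ε R ↔ diagQuad a 0 x < R ∧ ε < ‖x - x₀‖ := by
  rw [OmegaRe, closure_ball x₀ hε, Set.mem_sdiff, mem_closedBall_iff_norm, not_le]
  rfl

theorem isOpen_OmegaRe : IsOpen (OmegaRe n a x₀ ε R) :=
  (isOpen_lt (contDiff_diagQuad a 0).continuous continuous_const).sdiff isClosed_closure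

theorem OmegaRe_subset_closedRing (hε : ε ≠ 0) : OmegaRe n a x₀ ε R ⊆ closedRing a x₀ ε R :=
  fun _ hx => ⟨((mem_OmegaRe_iff hε).1 hx).1.le, ((mem_OmegaRe_iff hε).1 hx).2.le⟩

theorem isCompact_closedRing (ha : ∀ i, 0 < a i) : IsCompact (closedRing a x₀ ε R) :=
  isCompact_of_diagQuad_le ha
    ((isClosed_le (contDiff_diagQuad a 0).continuous continuous_const).inter
      (isClosed_le continuous_const (continuous_id.sub continuous_const).norm)) fun _ hx => hx.1

theorem closedRing_subset (hr : r ≤ R) : closedRing a x₀ ε r ⊆ closedRing a x₀ ε R :=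
  fun _ hx => ⟨hx.1.trans hr, hx.2⟩

theorem OmegaRe_subset (hr : r ≤ R) : OmegaRe n a x₀ ε r ⊆ OmegaRe n a x₀ ε R :=
  Set.sdiff_subset_sdiff_left fun _ hx => lt_of_lt_of_le hx hr

theorem norm_sub_eq_or_diagQuad_eq (hε : ε ≠ 0)
    (hx : x ∈ closedRing a x₀ ε R \ OmegaRe n a x₀ ε R) : ‖x - x₀‖ = ε ∨ diagQuad a 0 x = R := by
  by_contra! hne
  exact hx.2 ((mem_OmegaRe_iff hε).2 ⟨hx.1.1.lt_of_ne hne.2, hx.1.2.lt_of_ne' hne.1⟩)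

theorem mem_closure_OmegaRe_of_norm_sub_eq (hε : 0 < ε) (hx : ‖x - x₀‖ = ε)
    (hxR : diagQuad a 0 x < R) : x ∈ closure (OmegaRe n a x₀ ε R) := by
  have hlim : Tendsto (fun t : ℝ => x + t • (x - x₀)) (𝓝[>] 0) (𝓝 x) := by
    simpa using ((hasDerivAt_add_smul x (x - x₀) 0).continuousAt.tendsto).mono_left
      nhdsWithin_le_nhds
  have hq := hlim.eventually
    ((contDiff_diagQuad a 0).continuous.continuousAt.eventually_lt continuousAt_const hxR)
  refine mem_closure_of_tendsto hlim ?_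
  filter_upwards [hq, self_mem_nhdsWithin] with t htR (ht : 0 < t)
  refine (mem_OmegaRe_iff hε.ne').2 ⟨htR, ?_⟩
  rw [show x + t • (x - x₀) - x₀ = (1 + t) • (x - x₀) by module, norm_smul, hx,
    norm_of_nonneg (by linarith)]
  nlinarith

theorem mem_closure_OmegaRe_of_lt_norm_sub (hε : ε ≠ 0) (hR : 0 < R) (hx : ε < ‖x - x₀‖)
    (hxR : diagQuad a 0 x ≤ R) : x ∈ closure (OmegaRe n a x₀ ε R) := by
  have hlim : Tendsto (fun t : ℝ => (1 - t) • x) (𝓝[>] 0) (𝓝 x) := by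
    have hcont : Continuous fun t : ℝ => (1 - t) • x := by fun_prop
    simpa using (hcont.tendsto 0).mono_left nhdsWithin_le_nhds
  have hnorm : ∀ᶠ y in 𝓝 x, ε < ‖y - x₀‖ :=
    continuousAt_const.eventually_lt (by fun_prop) hx
  refine mem_closure_of_tendsto hlim ?_
  filter_upwards [hlim.eventually hnorm, Ioo_mem_nhdsGT (zero_lt_one (α := ℝ))] with t htε ht
  refine (mem_OmegaRe_iff hε).2 ⟨?_, htε⟩
  rw [diagQuad_zero_smul]
  have hsq : (1 - t) ^ 2 < 1 := pow_lt_one₀ (by linarith [ht.2]) (by linarith [ht.1]) two_ne_zero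
  nlinarith [sq_nonneg (1 - t)]

theorem closedRing_subset_closure_OmegaRe (hε : 0 < ε) (hR : 0 < R)
    (hball : Metric.closedBall x₀ ε ⊆ ESet n (Matrix.diagonal a) 0 R) :
    closedRing a x₀ ε R ⊆ closure (OmegaRe n a x₀ ε R) := by
  rintro x ⟨hxR, hxε⟩
  rcases hxε.eq_or_lt with heq | hlt
  · exact mem_closure_OmegaRe_of_norm_sub_eq hε heq.symm
      (hball (mem_closedBall_iff_norm.2 heq.ge))
  · exact mem_closure_OmegaRe_of_lt_norm_sub hε.ne' hR hlt hxR

theorem mem_closedRing_of_le_diagQuad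
    (hball : Metric.closedBall x₀ ε ⊆ ESet n (Matrix.diagonal a) 0 R₀)
    (hx : R₀ ≤ diagQuad a 0 x) (hxR : diagQuad a 0 x ≤ R) : x ∈ closedRing a x₀ ε R := by
  refine ⟨hxR, ?_⟩
  by_contra! hlt
  exact (hball (mem_closedBall_iff_norm.2 hlt.le)).not_ge hx

theorem le_diagQuad_one (hε : 0 ≤ ε) (hx : ε ≤ ‖x - x₀‖) :
    ε ^ 2 / 2 ≤ diagQuad 1 x₀ x := by
  rw [diagQuad_one]
  gcongr

end RingGeometry

/-- A `k`-convex solution of `S_k(D²u) = 1` in the ring `E_R(0) ∖ B̄_ε(x₀)`, twice differentiable up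
to the boundary, vanishing on the inner sphere and equal to the constant `c` on the outer
ellipsoid. The equation is split into its two inequalities, which is how it meets barriers. -/
structure IsRingSolution (n k : ℕ) (a : Fin n → ℝ) (x₀ : Euc n) (ε R c : ℝ) (u : Euc n → ℝ) :
    Prop where
  contDiffAt : ∀ x ∈ closedRing a x₀ ε R, ContDiffAt ℝ 2 u x
  isSubsolution : IsSubsolution n k u (OmegaRe n a x₀ ε R)
  isSupersolution : IsSupersolution n k u (OmegaRe n a x₀ ε R)
  eq_zero : ∀ x, ‖x - x₀‖ = ε → u x = 0
  eq_const : ∀ x, diagQuad a 0 x = R → u x = c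

section RingSolution

variable {n k : ℕ} {a : Fin n → ℝ} {l L ε R R₀ r α c d m : ℝ} {x₀ x : Euc n} {u : Euc n → ℝ}

theorem ApproxSol.isRingSolution (hu : ApproxSol n k a x₀ ε R R₀ α u) (hε : 0 < ε) (hR : 0 < R)
    (hball : Metric.closedBall x₀ ε ⊆ ESet n (Matrix.diagonal a) 0 R) :
    IsRingSolution n k a x₀ ε R (∫ t in R₀..R, genInt n k a α t) u := by
  obtain ⟨⟨V, hVo, hVs, hVc⟩, hconv, hSk, hin, hout⟩ := hu
  have hcd : ∀ x ∈ closedRing a x₀ ε R, ContDiffAt ℝ 2 u x := fun x hx =>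
    (hVc.contDiffAt (hVo.mem_nhds
      (hVs (closedRing_subset_closure_OmegaRe hε hR hball hx)))).of_le
        (WithTop.coe_le_coe.2 (le_top : (2 : ℕ∞) ≤ ⊤))
  have hcdΩ := fun x hx => hcd x (OmegaRe_subset_closedRing hε.ne' hx)
  refine ⟨hcd, ⟨hcdΩ, hconv, fun x hx => (hSk x hx).ge⟩, ⟨hcdΩ, fun x hx => (hSk x hx).le⟩,
    fun x hx => hin x (mem_sphere_iff_norm.2 hx), fun x hx => ?_⟩
  rw [hout x (by rwa [diagQuad, sub_zero] at hx), ubar_eq_comp_diagQuad]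
  simp only [hx]

namespace IsRingSolution

theorem continuousOn (hu : IsRingSolution n k a x₀ ε R c u) :
    ContinuousOn u (closedRing a x₀ ε R) :=
  fun x hx => (hu.contDiffAt x hx).continuousAt.continuousWithinAt

theorem hasFDerivAt (hu : IsRingSolution n k a x₀ ε R c u) (hx : x ∈ closedRing a x₀ ε R) :
    HasFDerivAt u (fderiv ℝ u x) x :=
  ((hu.contDiffAt x hx).differentiableAt two_ne_zero).hasFDerivAt

theorem le_of_isSupersolution (hu : IsRingSolution n k a x₀ ε R c u) (hk1 : 1 ≤ k) (hk : k ≤ n)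
    (ha : ∀ i, 0 < a i) (hε : ε ≠ 0) (hr : r ≤ R) {g : Euc n → ℝ}
    (hg : IsSupersolution n k g (OmegaRe n a x₀ ε r))
    (hgc : ContinuousOn g (closedRing a x₀ ε r)) (hin : ∀ x, ‖x - x₀‖ = ε → 0 ≤ g x)
    (hout : ∀ x ∈ closedRing a x₀ ε r, diagQuad a 0 x = r → u x ≤ g x) :
    ∀ x ∈ closedRing a x₀ ε r, u x ≤ g x := by
  refine (hu.isSubsolution.mono (OmegaRe_subset hr)).le_of_le_on_diff hg hk1 hk isOpen_OmegaRe
    (OmegaRe_subset_closedRing hε) (isCompact_closedRing ha)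
    (hu.continuousOn.mono (closedRing_subset hr)) hgc fun x hx => ?_
  rcases norm_sub_eq_or_diagQuad_eq hε hx with hxε | hxr
  · exact (hu.eq_zero x hxε).trans_le (hin x hxε)
  · exact hout x hx.1 hxr

theorem le_of_isSubsolution (hu : IsRingSolution n k a x₀ ε R c u) (hk1 : 1 ≤ k) (hk : k ≤ n)
    (ha : ∀ i, 0 < a i) (hε : ε ≠ 0) (hr : r ≤ R) {f : Euc n → ℝ}
    (hf : IsSubsolution n k f (OmegaRe n a x₀ ε r))
    (hfc : ContinuousOn f (closedRing a x₀ ε r)) (hin : ∀ x, ‖x - x₀‖ = ε → f x ≤ 0)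
    (hout : ∀ x ∈ closedRing a x₀ ε r, diagQuad a 0 x = r → f x ≤ u x) :
    ∀ x ∈ closedRing a x₀ ε r, f x ≤ u x := by
  refine hf.le_of_le_on_diff (hu.isSupersolution.mono (OmegaRe_subset hr)) hk1 hk isOpen_OmegaRe
    (OmegaRe_subset_closedRing hε) (isCompact_closedRing ha) hfc
    (hu.continuousOn.mono (closedRing_subset hr)) fun x hx => ?_
  rcases norm_sub_eq_or_diagQuad_eq hε hx with hxε | hxr
  · exact (hin x hxε).trans_eq (hu.eq_zero x hxε).symm
  · exact hout x hx.1 hxr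

theorem le_diagQuad_add (hu : IsRingSolution n k a x₀ ε R c u) (hk1 : 1 ≤ k) (hk : k ≤ n)
    (ha : ∀ i, 0 < a i) (hSk : esymmVec n k a = 1) (hε : ε ≠ 0) (hRc : R ≤ c) :
    ∀ x ∈ closedRing a x₀ ε R, u x ≤ 1 * diagQuad a 0 x + (c - R) := by
  refine hu.le_of_isSupersolution hk1 hk ha hε le_rfl
    (isSupersolution_affine_diagQuad hk (by rw [hSk, one_pow, one_mul]) 0 _ _)
    (contDiff_affine_diagQuad a 0 _ _).continuous.continuousOn (fun x _ => ?_) fun x _ hx => ?_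
  · linarith [diagQuad_nonneg (fun i => (ha i).le) 0 x]
  · linarith [hu.eq_const x hx]

theorem affine_diagQuad_le (hu : IsRingSolution n k a x₀ ε R c u) (hk1 : 1 ≤ k) (hk : k ≤ n)
    (ha : ∀ i, 0 < a i) (hSk : esymmVec n k a = 1) (hε : ε ≠ 0)
    (hball : Metric.closedBall x₀ ε ⊆ ESet n (Matrix.diagonal a) 0 R₀) (hm : 1 ≤ m)
    (hin : m * R₀ + d ≤ 0) (hout : m * R + d ≤ c) :
    ∀ x ∈ closedRing a x₀ ε R, m * diagQuad a 0 x + d ≤ u x := by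
  refine hu.le_of_isSubsolution hk1 hk ha hε le_rfl
    (isSubsolution_affine_diagQuad ha hk (by linarith)
      (by rw [hSk, mul_one]; exact one_le_pow₀ hm) 0 _ _)
    (contDiff_affine_diagQuad a 0 _ _).continuous.continuousOn (fun x hx => ?_) fun x _ hx => ?_
  · have hxR₀ : diagQuad a 0 x < R₀ := hball (mem_closedBall_iff_norm.2 hx.le)
    nlinarith
  · rwa [hx, hu.eq_const x hx]

/- The affine barrier `s - R₀` gives `u ≥ 0` on `{s = R₀}`, where `ū` vanishes. -/
theorem ubar_le (hu : IsRingSolution n k a x₀ ε R (∫ t in R₀..R, genInt n k a α t) u)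
    (hk1 : 1 ≤ k) (hk : k ≤ n) (ha : ∀ i, 0 < a i) (hSk : esymmVec n k a = 1) (hε : ε ≠ 0)
    (hball : Metric.closedBall x₀ ε ⊆ ESet n (Matrix.diagonal a) 0 R₀) (hR₀ : 0 < R₀)
    (hR : R₀ ≤ R) (hα : 0 ≤ α) (hx : R₀ ≤ diagQuad a 0 x) (hxR : diagQuad a 0 x ≤ R) :
    ubar n k a R₀ α x ≤ u x := by
  have hq := (contDiff_diagQuad a 0).continuous
  have hubar := isSubsolution_ubar hk1 hk ha hSk hR₀ hα
  have hmem : ∀ y ∈ {y | R₀ ≤ diagQuad a 0 y ∧ diagQuad a 0 y ≤ R}, y ∈ closedRing a x₀ ε R :=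
    fun y hy => mem_closedRing_of_le_diagQuad hball hy.1 hy.2
  refine IsSubsolution.le_of_le_on_diff (D := {y | R₀ < diagQuad a 0 y ∧ diagQuad a 0 y < R})
    (K := {y | R₀ ≤ diagQuad a 0 y ∧ diagQuad a 0 y ≤ R})
    (hubar.mono fun y hy => hR₀.trans hy.1) (hu.isSupersolution.mono fun y hy => ?_) hk1 hk
    ((isOpen_lt continuous_const hq).inter (isOpen_lt hq continuous_const))
    (fun y hy => ⟨hy.1.le, hy.2.le⟩)
    (isCompact_of_diagQuad_le ha
      ((isClosed_le continuous_const hq).inter (isClosed_le hq continuous_const)) fun y hy => hy.2)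
    (fun y hy => (hubar.contDiffAt y (hR₀.trans_le hy.1)).continuousAt.continuousWithinAt)
    (hu.continuousOn.mono hmem) (fun y hy => ?_) x ⟨hx, hxR⟩
  · refine (mem_OmegaRe_iff hε).2 ⟨hy.2, ?_⟩
    by_contra! hle
    exact (hball (mem_closedBall_iff_norm.2 hle)).not_gt hy.1
  · rw [ubar_eq_comp_diagQuad]
    rcases hy.1.1.eq_or_lt with heq | hlt
    · have hle := hu.affine_diagQuad_le hk1 hk ha hSk hε hball le_rfl (d := -R₀) (by linarith)
        (by linarith [sub_le_integral_genInt (n := n) (k := k) (a := a) hα hR₀ hR]) y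
        (hmem y hy.1)
      simp only [← heq, intervalIntegral.integral_same] at hle ⊢
      linarith
    · have hyR : diagQuad a 0 y = R := hy.1.2.eq_of_not_lt fun hyR => hy.2 ⟨hlt, hyR⟩
      simp only [hu.eq_const y hyR, hyR, le_refl]

theorem affine_diagQuad_one_le (hu : IsRingSolution n k a x₀ ε R c u) (hk1 : 1 ≤ k) (hk : k ≤ n)
    (ha : ∀ i, 0 < a i) (hε : ε ≠ 0) (hr : r ≤ R) (hm : 0 < m)
    (hmk : 1 ≤ m ^ k * (n.choose k : ℝ))
    (hout : ∀ x ∈ closedRing a x₀ ε r, diagQuad a 0 x = r → m / 2 * ‖x - x₀‖ ^ 2 ≤ u x) :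
    ∀ x ∈ closedRing a x₀ ε r, m * diagQuad 1 x₀ x + -(m * (ε ^ 2 / 2)) ≤ u x := by
  refine hu.le_of_isSubsolution hk1 hk ha hε hr
    (isSubsolution_affine_diagQuad (fun _ => one_pos) hk hm
      (by simpa only [← Pi.one_def, esymmVec_one]) x₀ _ _)
    (contDiff_affine_diagQuad 1 x₀ _ _).continuous.continuousOn (fun x hx => ?_)
    fun x hx hxr => ?_
  · rw [diagQuad_one, hx, add_neg_cancel]
  · have hle := hout x hx hxr
    have hpos : 0 ≤ m * (ε ^ 2 / 2) := by positivity
    rw [diagQuad_one]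
    linarith

theorem le_integral_radialProfile (hu : IsRingSolution n k a x₀ ε R c u) (hk1 : 1 ≤ k)
    (hk : k ≤ n) (ha : ∀ i, 0 < a i) (hε : 0 < ε) (hr : r ≤ R) (hm : 0 ≤ m)
    (hout : ∀ x ∈ closedRing a x₀ ε r, diagQuad a 0 x = r →
      1 ≤ ‖x - x₀‖ ∧ u x ≤ ∫ s in (ε ^ 2 / 2)..(1 / 2), radialProfile n k m s) :
    ∀ x ∈ closedRing a x₀ ε r,
      u x ≤ ∫ s in (ε ^ 2 / 2)..(diagQuad 1 x₀ x), radialProfile n k m s := by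
  have hε2 : 0 < ε ^ 2 / 2 := by positivity
  have hrad := isSupersolution_radial hk1 hk hε2 m x₀
  have hpos : ∀ x ∈ closedRing a x₀ ε r, 0 < diagQuad 1 x₀ x := fun x hx =>
    hε2.trans_le (le_diagQuad_one hε.le hx.2)
  refine hu.le_of_isSupersolution hk1 hk ha hε.ne' hr
    (hrad.mono fun x hx => hpos x (OmegaRe_subset_closedRing hε.ne' hx))
    (fun x hx => (hrad.contDiffAt x (hpos x hx)).continuousAt.continuousWithinAt)
    (fun x hx => ?_) fun x hx hxr => ?_
  · simp only [diagQuad_one, hx, intervalIntegral.integral_same, le_refl]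
  · obtain ⟨hnorm, hle⟩ := hout x hx hxr
    have hint := contDiffOn_radialProfile (n := n) (k := k) (m := m) |>.continuousOn
    have hhalf : (1 / 2 : ℝ) ≤ diagQuad 1 x₀ x := by
      simpa only [one_pow] using le_diagQuad_one zero_le_one hnorm
    have htail : 0 ≤ ∫ s in (1 / 2)..(diagQuad 1 x₀ x), radialProfile n k m s :=
      intervalIntegral.integral_nonneg hhalf fun t ht =>
        radialProfile_nonneg hm (by linarith [ht.1])
    have hadd := intervalIntegral.integral_add_adjacent_intervals
      (intervalIntegrable_of_continuousOn_Ioi hint hε2 one_half_pos)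
      (intervalIntegrable_of_continuousOn_Ioi hint one_half_pos (hpos x hx))
    simp only [← hadd]
    linarith

theorem norm_fderiv_mem_of_norm_sub_eq (hu : IsRingSolution n k a x₀ ε R c u) (hε : 0 < ε)
    (hr : r ≤ R) (hball : Metric.closedBall x₀ ε ⊆ ESet n (Matrix.diagonal a) 0 r) {m₁ m₂ : ℝ}
    (hm₁ : 0 ≤ m₁)
    (hlow : ∀ x ∈ closedRing a x₀ ε r, m₁ * diagQuad 1 x₀ x + -(m₁ * (ε ^ 2 / 2)) ≤ u x)
    (hup : ∀ x ∈ closedRing a x₀ ε r,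
      u x ≤ ∫ s in (ε ^ 2 / 2)..(diagQuad 1 x₀ x), radialProfile n k m₂ s)
    (hx : ‖x - x₀‖ = ε) :
    ‖fderiv ℝ u x‖ ∈ Set.Icc (m₁ * ε) (radialProfile n k m₂ (ε ^ 2 / 2) * ε) := by
  have hε2 : 0 < ε ^ 2 / 2 := by positivity
  have hxr : diagQuad a 0 x < r := hball (mem_closedBall_iff_norm.2 hx.le)
  have hqx : diagQuad 1 x₀ x = ε ^ 2 / 2 := by rw [diagQuad_one, hx]
  have hnorm : ‖diagForm 1 (x - x₀)‖ = ε := by rw [norm_diagForm_one, hx]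
  have hprim : HasDerivAt (fun t => ∫ s in (ε ^ 2 / 2)..t, radialProfile n k m₂ s)
      (radialProfile n k m₂ (ε ^ 2 / 2)) (diagQuad 1 x₀ x) := by
    rw [hqx]
    exact hasDerivAt_primitive contDiffOn_radialProfile.continuousOn hε2 hε2
  obtain ⟨τ, hτ₁, hτ₂, hτ⟩ := exists_fderiv_eq_smul_of_between
    (hu.hasFDerivAt ⟨hxr.le.trans hr, hx.ge⟩) (hasFDerivAt_diagQuad 1 x₀ x)
    (hasFDerivAt_affine_diagQuad 1 x₀ x m₁ (-(m₁ * (ε ^ 2 / 2))))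
    (hprim.comp_hasFDerivAt x (hasFDerivAt_diagQuad 1 x₀ x))
    (norm_ne_zero_iff.1 (hnorm.trans_ne hε.ne'))
    (by rw [hqx, hu.eq_zero x hx, add_neg_cancel])
    (by simp only [Function.comp_apply, hqx, intervalIntegral.integral_same, hu.eq_zero x hx])
    (by
      filter_upwards [(contDiff_diagQuad a 0).continuous.continuousAt.eventually_lt
        continuousAt_const hxr] with y hyr hxy
      rw [diagQuad_one, diagQuad_one, hx, div_lt_div_iff_of_pos_right two_pos] at hxy
      have hy := (⟨hyr.le, (lt_of_pow_lt_pow_left₀ 2 (norm_nonneg _) hxy).le⟩ :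
        y ∈ closedRing a x₀ ε r)
      exact ⟨hlow y hy, hup y hy⟩)
  rw [hτ, norm_smul, hnorm, norm_of_nonneg (hm₁.trans hτ₁)]
  exact ⟨by gcongr, by gcongr⟩

/- The inner barriers are used on `E_{2R₀}(0)`, where `u` is bounded below by `ū` and above by
the affine barrier. -/
theorem norm_fderiv_mem_of_norm_sub_eq_of_le
    (hu : IsRingSolution n k a x₀ ε R (∫ t in R₀..R, genInt n k a α t) u) (hk1 : 1 ≤ k)
    (hk : k ≤ n) (ha : ∀ i, 0 < a i) (hSk : esymmVec n k a = 1) (hl0 : 0 < l)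
    (hl : ∀ i, l ≤ a i) (hL0 : 0 < L) (hL : ∀ i, a i ≤ L) (hx₀ : ‖x₀‖ < 1 / 2) (hε : 0 < ε)
    (hε' : ε < 1 / 2) (hR₀ : L ≤ R₀) (hR : 2 * R₀ ≤ R) (hα : 0 ≤ α) {b T : ℝ} (hb : 0 < b)
    (hbk : b ^ k * (n.choose k : ℝ) = 1)
    (hlow : b * (8 * R₀ / l + 1 / 2) ≤ ∫ t in R₀..(2 * R₀), genInt n k a α t)
    (hRc : R ≤ ∫ t in R₀..R, genInt n k a α t) (hT : ∫ t in R₀..R, genInt n k a α t ≤ R + T)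
    (hm : 0 ≤ m) (hup : 2 * R₀ + T ≤ ∫ s in (ε ^ 2 / 2)..(1 / 2), radialProfile n k m s)
    (hx : ‖x - x₀‖ = ε) :
    ‖fderiv ℝ u x‖ ∈ Set.Icc (2 * b * ε) (radialProfile n k m (ε ^ 2 / 2) * ε) := by
  have hR₀0 : 0 < R₀ := hL0.trans_le hR₀
  refine hu.norm_fderiv_mem_of_norm_sub_eq hε hR
    (closedBall_subset_ESet hL0 hL (by linarith) hx₀ hε') (by positivity) ?_ ?_ hx
  · refine hu.affine_diagQuad_one_le hk1 hk ha hε.ne' hR (by positivity) ?_ fun y _ hyR => ?_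
    · rw [mul_pow, mul_assoc, hbk, mul_one]
      exact one_le_pow₀ one_le_two
    · have hubar := hu.ubar_le hk1 hk ha hSk hε.ne'
        (closedBall_subset_ESet hL0 hL hR₀ hx₀ hε') hR₀0 (by linarith) hα (by linarith)
        (hyR.trans_le hR)
      simp only [ubar_eq_comp_diagQuad, hyR] at hubar
      calc 2 * b / 2 * ‖y - x₀‖ ^ 2 ≤ 2 * b / 2 * (4 * diagQuad a 0 y / l + 1 / 2) := by
            gcongr
            exact norm_sub_sq_le hl0 hl hx₀.le y
        _ = b * (8 * R₀ / l + 1 / 2) := by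
            rw [hyR]
            ring
        _ ≤ u y := hlow.trans hubar
  · refine hu.le_integral_radialProfile hk1 hk ha hε hR hm fun y hy hyR => ⟨?_, ?_⟩
    · exact one_le_norm_sub hL0 hL hx₀.le (by linarith)
    · linarith [hu.le_diagQuad_add hk1 hk ha hSk hε.ne' hRc y (closedRing_subset hR hy)]

theorem norm_fderiv_mem_of_diagQuad_eq (hu : IsRingSolution n k a x₀ ε R c u) (hk1 : 1 ≤ k)
    (hk : k ≤ n) (ha : ∀ i, 0 < a i) (hSk : esymmVec n k a = 1) (hε : ε ≠ 0)
    (hball : Metric.closedBall x₀ ε ⊆ ESet n (Matrix.diagonal a) 0 R₀) (hR₀ : 0 < R₀)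
    (hR : 2 * R₀ ≤ R) (hm : 1 ≤ m) (hRc : R ≤ c) (hcm : c ≤ m * R) (hx : diagQuad a 0 x = R) :
    ‖fderiv ℝ u x‖ ∈ Set.Icc ‖diagForm a (x - 0)‖ (2 * m * ‖diagForm a (x - 0)‖) := by
  have hlow := hu.affine_diagQuad_le hk1 hk ha hSk hε hball (m := 2 * m) (d := c - 2 * m * R)
    (by linarith) (by nlinarith) (by linarith)
  have hup := hu.le_diagQuad_add hk1 hk ha hSk hε hRc
  have hmem : x ∈ closedRing a x₀ ε R :=
    mem_closedRing_of_le_diagQuad hball (by linarith) hx.le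
  have hg' : diagForm a (x - 0) ≠ 0 := by
    intro hzero
    have hq := diagQuad_eq_diagForm a 0 x
    rw [hzero, zero_apply, mul_zero] at hq
    linarith
  have hderiv : ∀ μ d : ℝ, HasFDerivAt (fun y => μ * diagQuad a 0 y + d)
      (-μ • -diagForm a (x - 0)) x := fun μ d => by
    simpa only [smul_neg, neg_smul, neg_neg] using hasFDerivAt_affine_diagQuad a 0 x μ d
  obtain ⟨τ, hτ₁, hτ₂, hτ⟩ := exists_fderiv_eq_smul_of_between (hu.hasFDerivAt hmem)
    (hasFDerivAt_diagQuad a 0 x).neg (hderiv (2 * m) (c - 2 * m * R)) (hderiv 1 (c - R))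
    (neg_ne_zero.2 hg') (by rw [hx, hu.eq_const x hx]; ring) (by rw [hx, hu.eq_const x hx]; ring)
    (by
      filter_upwards [continuousAt_const.eventually_lt
        (contDiff_diagQuad a 0).continuous.continuousAt (show R₀ < diagQuad a 0 x by linarith)]
        with y hyR₀ hxy
      have hy := mem_closedRing_of_le_diagQuad hball hyR₀.le
        ((neg_lt_neg_iff.1 hxy).le.trans_eq hx)
      exact ⟨hlow y hy, hup y hy⟩)
  rw [hτ, norm_smul, norm_neg, norm_of_nonpos (by linarith)]
  constructor <;> nlinarith [norm_nonneg (diagForm a (x - 0))]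

theorem norm_fderiv_mem_Icc_sqrt_of_diagQuad_eq (hu : IsRingSolution n k a x₀ ε R c u)
    (hk1 : 1 ≤ k) (hk : k ≤ n) (ha : ∀ i, 0 < a i) (hSk : esymmVec n k a = 1) (hl0 : 0 ≤ l)
    (hl : ∀ i, l ≤ a i) (hL0 : 0 ≤ L) (hL : ∀ i, a i ≤ L) (hε : ε ≠ 0)
    (hball : Metric.closedBall x₀ ε ⊆ ESet n (Matrix.diagonal a) 0 R₀) (hR₀ : 0 < R₀)
    (hR : 2 * R₀ ≤ R) (hm : 1 ≤ m) (hRc : R ≤ c) (hcm : c ≤ m * R) (hx : diagQuad a 0 x = R) :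
    ‖fderiv ℝ u x‖ ∈ Set.Icc (1 / 2 * √(l * R)) (2 * m * √(2 * L) * √R) := by
  have hmem := hu.norm_fderiv_mem_of_diagQuad_eq hk1 hk ha hSk hε hball hR₀ hR hm hRc hcm hx
  have hlow := sqrt_mul_le_norm_diagForm (fun i => (ha i).le) hl 0 x
  have hup := norm_diagForm_le_sqrt_mul (fun i => (ha i).le) hL 0 x
  rw [hx] at hlow hup
  constructor
  · calc 1 / 2 * √(l * R) ≤ √(l * R) := by linarith [sqrt_nonneg (l * R)]
      _ ≤ √(l * (2 * R)) := by
        gcongr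
        linarith
      _ ≤ ‖fderiv ℝ u x‖ := hlow.trans hmem.1
  · calc ‖fderiv ℝ u x‖ ≤ 2 * m * ‖diagForm a (x - 0)‖ := hmem.2
      _ ≤ 2 * m * √(L * (2 * R)) := by gcongr
      _ = 2 * m * √(2 * L) * √R := by
        rw [show L * (2 * R) = 2 * L * R by ring, sqrt_mul (by positivity)]
        ring

end IsRingSolution

theorem choose_rpow_pow_mul_choose (hk1 : 1 ≤ k) (hk : k ≤ n) :
    ((n.choose k : ℝ) ^ (-(1 : ℝ) / (k : ℝ))) ^ k * (n.choose k : ℝ) = 1 := by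
  have hk0 : (k : ℝ) ≠ 0 := by exact_mod_cast (zero_lt_one.trans_le hk1).ne'
  have hchoose : (0 : ℝ) < n.choose k := by exact_mod_cast Nat.choose_pos hk
  rw [← rpow_natCast, ← rpow_mul hchoose.le, div_mul_cancel₀ _ hk0, rpow_neg_one]
  exact inv_mul_cancel₀ hchoose.ne'

theorem ApproxSol.exists_norm_fderiv_mem_of_mem_sphere (hk1 : 1 ≤ k) (hk : k ≤ n)
    (ha : ∀ i, 0 < a i) (hSk : esymmVec n k a = 1) (hE : genExp n k a < -1) (hl0 : 0 < l)
    (hl : ∀ i, l ≤ a i) (hL0 : 0 < L) (hL : ∀ i, a i ≤ L) (hR₀ : L ≤ R₀) (hα : 0 ≤ α)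
    (h2R₀ : 2 * R₀ ≤ ∫ t in R₀..(2 * R₀), genInt n k a α t)
    (hlow : (n.choose k : ℝ) ^ (-(1 : ℝ) / (k : ℝ)) * (8 * R₀ / l + 1 / 2) ≤
      ∫ t in R₀..(2 * R₀), genInt n k a α t) :
    ∃ C : ℝ, 0 < C ∧ ∀ x₀ : Euc n, ‖x₀‖ < 1 / 2 → ∀ ε : ℝ, 0 < ε → ε < 1 / 2 →
      ∀ R : ℝ, 2 * R₀ ≤ R → ∀ u : Euc n → ℝ, ApproxSol n k a x₀ ε R R₀ α u →
        ∀ x ∈ Metric.sphere x₀ ε, ‖fderiv ℝ u x‖ ∈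
          Set.Icc (2 * (n.choose k : ℝ) ^ (-(1 : ℝ) / (k : ℝ)) * ε) (Ceps n k C ε) := by
  have hR₀0 : 0 < R₀ := hL0.trans_le hR₀
  have hchoose : 0 < (n.choose k : ℝ) ^ (-(1 : ℝ) / (k : ℝ)) :=
    rpow_pos_of_pos (by exact_mod_cast Nat.choose_pos hk) _
  have hT : 0 ≤ α * (R₀ ^ (genExp n k a + 1) / -(genExp n k a + 1)) :=
    mul_nonneg hα (div_nonneg (rpow_nonneg hR₀0.le _) (by linarith))
  obtain ⟨C, hC, hrad⟩ := exists_le_integral_radialProfile n hk1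
    (K := 2 * R₀ + α * (R₀ ^ (genExp n k a + 1) / -(genExp n k a + 1))) (by positivity)
  refine ⟨C, hC, fun x₀ hx₀ ε hε hε' R hR u hu x hx => ?_⟩
  obtain ⟨m, hm, hup, hmC⟩ := hrad ε hε hε'
  have hring := hu.isRingSolution hε (by linarith)
    (closedBall_subset_ESet hL0 hL (by linarith) hx₀ hε')
  exact Set.Icc_subset_Icc_right hmC (hring.norm_fderiv_mem_of_norm_sub_eq_of_le hk1 hk ha hSk
    hl0 hl hL0 hL hx₀ hε hε' hR₀ hR hα hchoose (choose_rpow_pow_mul_choose hk1 hk) hlow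
    (le_integral_genInt hα hR₀0 (by linarith) hR h2R₀)
    (integral_genInt_le_add hk1 hE hα hR₀0 (by linarith)) hm.le hup (mem_sphere_iff_norm.1 hx))

theorem ApproxSol.norm_fderiv_mem_of_quadA_eq (hu : ApproxSol n k a x₀ ε R R₀ α u)
    (hk1 : 1 ≤ k) (hk : k ≤ n) (ha : ∀ i, 0 < a i) (hSk : esymmVec n k a = 1)
    (hE : genExp n k a ≤ 0) (hl0 : 0 ≤ l) (hl : ∀ i, l ≤ a i) (hL0 : 0 < L) (hL : ∀ i, a i ≤ L)
    (hx₀ : ‖x₀‖ < 1 / 2) (hε : 0 < ε) (hε' : ε < 1 / 2) (hR₀ : L ≤ R₀) (hR : 2 * R₀ ≤ R)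
    (hα : 0 ≤ α) (h2R₀ : 2 * R₀ ≤ ∫ t in R₀..(2 * R₀), genInt n k a α t)
    (hx : quadA n (Matrix.diagonal a) x = R) :
    ‖fderiv ℝ u x‖ ∈
      Set.Icc (1 / 2 * √(l * R)) (2 * genInt n k a α R₀ * √(2 * L) * √R) := by
  have hR₀0 : 0 < R₀ := hL0.trans_le hR₀
  have hring := hu.isRingSolution hε (by linarith)
    (closedBall_subset_ESet hL0 hL (by linarith) hx₀ hε')
  exact hring.norm_fderiv_mem_Icc_sqrt_of_diagQuad_eq hk1 hk ha hSk hl0 hl hL0.le hL hε.ne'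
    (closedBall_subset_ESet hL0 hL hR₀ hx₀ hε') hR₀0 hR (one_le_genInt hα hR₀0.le)
    (le_integral_genInt hα hR₀0 (by linarith) hR h2R₀)
    (integral_genInt_le_mul hE hα hR₀0 (by linarith)) (by rwa [diagQuad, sub_zero])

theorem ApproxSol.exists_norm_fderiv_mem (hk1 : 1 ≤ k) (hk : k ≤ n) (ha : ∀ i, 0 < a i)
    (hSk : esymmVec n k a = 1) (hE : genExp n k a < -1) (hl0 : 0 < l) (hl : ∀ i, l ≤ a i)
    (hL0 : 0 < L) (hL : ∀ i, a i ≤ L) (hR₀ : L ≤ R₀) (hα : 0 ≤ α)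
    (h2R₀ : 2 * R₀ ≤ ∫ t in R₀..(2 * R₀), genInt n k a α t)
    (hlow : (n.choose k : ℝ) ^ (-(1 : ℝ) / (k : ℝ)) * (8 * R₀ / l + 1 / 2) ≤
      ∫ t in R₀..(2 * R₀), genInt n k a α t) :
    ∃ C : ℝ, 0 < C ∧ ∀ x₀ : Euc n, ‖x₀‖ < 1 / 2 → ∀ ε : ℝ, 0 < ε → ε < 1 / 2 →
      ∀ R : ℝ, 2 * R₀ ≤ R → ∀ u : Euc n → ℝ, ApproxSol n k a x₀ ε R R₀ α u →
        (∀ x ∈ Metric.sphere x₀ ε, ‖fderiv ℝ u x‖ ∈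
          Set.Icc (2 * (n.choose k : ℝ) ^ (-(1 : ℝ) / (k : ℝ)) * ε) (Ceps n k C ε)) ∧
        ∀ x : Euc n, quadA n (Matrix.diagonal a) x = R →
          ‖fderiv ℝ u x‖ ∈ Set.Icc (1 / 2 * √(l * R)) (C * √R) := by
  obtain ⟨C, hC, hinner⟩ := ApproxSol.exists_norm_fderiv_mem_of_mem_sphere hk1 hk ha hSk hE hl0
    hl hL0 hL hR₀ hα h2R₀ hlow
  have hM : 1 ≤ genInt n k a α R₀ := one_le_genInt hα (hL0.trans_le hR₀).le
  refine ⟨C + 2 * genInt n k a α R₀ * √(2 * L), by positivity,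
    fun x₀ hx₀ ε hε hε' R hR u hu => ⟨fun x hx => ?_, fun x hx => ?_⟩⟩
  · exact Set.Icc_subset_Icc_right
      (Ceps_le_Ceps hk1 hε.le (le_add_of_nonneg_right (by positivity)))
      (hinner x₀ hx₀ ε hε hε' R hR u hu x hx)
  · exact Set.Icc_subset_Icc_right
      (mul_le_mul_of_nonneg_right (le_add_of_nonneg_left hC.le) (sqrt_nonneg R))
      (hu.norm_fderiv_mem_of_quadA_eq hk1 hk ha hSk (by linarith) hl0.le hl hL0 hL hx₀ hε hε' hR₀
        hR hα h2R₀ hx)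

end RingSolution

/-- Lemma 2.3: boundary gradient estimates on `∂B_ε(x₀)` and `∂E_R(0)`,
with `a* = (C_n^k)^{-1/k}`. -/
theorem statement5 (n k : ℕ) (hn : 3 ≤ n) (hk1 : 1 ≤ k) (hkn : k ≤ n)
    (a : Fin n → ℝ) (hA : MemA n k (Matrix.diagonal a))
    (hk1' : k = 1 → (⨆ i, a i) < 1 / 2) :
    ∃ Λ₀ : ℝ, 0 < Λ₀ ∧ ∀ R₀ : ℝ, Λ₀ ≤ R₀ →
      ∃ α₀ : ℝ, 0 < α₀ ∧ ∀ α : ℝ, α₀ ≤ α →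
        ∃ C : ℝ, 0 < C ∧
        ∀ x₀ : Euc n, x₀ ∈ Metric.ball (0 : Euc n) (1 / 2) → x₀ ≠ 0 →
        ∀ ε : ℝ, 0 < ε → ε < 1 / 2 →
        ∀ R : ℝ, 3 * R₀ < R →
        ∀ u : Euc n → ℝ, ApproxSol n k a x₀ ε R R₀ α u →
          (∀ x ∈ Metric.sphere x₀ ε,
            2 * ((n.choose k : ℝ) ^ (-(1 : ℝ) / (k : ℝ))) * ε ≤ ‖fderiv ℝ u x‖ ∧
            ‖fderiv ℝ u x‖ ≤ Ceps n k C ε) ∧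
          (∀ x : Euc n, quadA n (Matrix.diagonal a) x = R →
            (1 / 2) * Real.sqrt ((⨅ i, a i) * R) ≤ ‖fderiv ℝ u x‖ ∧
            ‖fderiv ℝ u x‖ ≤ C * Real.sqrt R) := by
  obtain ⟨-, hpd, hSk⟩ := hA
  rw [matSk_diagonal hkn] at hSk
  have ha := Matrix.posDef_diagonal_iff.1 hpd
  have : Nonempty (Fin n) := ⟨⟨0, by lia⟩⟩
  have hE := genExp_lt_neg_one (hkfun_pos hk1 hkn ha) (two_mul_hkfun_lt hn hk1 ha hSk hk1')
  have hl : ∀ i, ⨅ i, a i ≤ a i := ciInf_le (Set.finite_range a).bddBelow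
  obtain ⟨i₀, hi₀⟩ := exists_eq_ciInf_of_finite (f := a)
  have hl0 : 0 < ⨅ i, a i := hi₀ ▸ ha i₀
  have hL : ∀ i, a i ≤ ∑ i, a i := fun i =>
    Finset.single_le_sum (fun j _ => (ha j).le) (Finset.mem_univ i)
  have hL0 : 0 < ∑ i, a i := Finset.sum_pos (fun i _ => ha i) Finset.univ_nonempty
  refine ⟨∑ i, a i, hL0, fun R₀ hR₀ => ?_⟩
  obtain ⟨α₀, hα₀, hint⟩ := exists_forall_le_integral_genInt hk1 (by linarith) (hL0.trans_le hR₀)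
    (show R₀ < 2 * R₀ by linarith)
    (max (2 * R₀) ((n.choose k : ℝ) ^ (-(1 : ℝ) / k) * (8 * R₀ / (⨅ i, a i) + 1 / 2)))
  refine ⟨α₀, hα₀, fun α hα₀α => ?_⟩
  obtain ⟨h2R₀, hlow⟩ := max_le_iff.1 (hint α hα₀α)
  obtain ⟨C, hC, hbounds⟩ := ApproxSol.exists_norm_fderiv_mem hk1 hkn ha hSk hE hl0 hl hL0 hL hR₀
    (hα₀.le.trans hα₀α) h2R₀ hlow
  exact ⟨C, hC, fun x₀ hx₀ _ ε hε hε' R hR u hu =>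
    hbounds x₀ (mem_ball_zero_iff.1 hx₀) ε hε hε' R (by linarith) u hu⟩
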